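/- Every language recognized by an L◇ grammar is context-free. -/

import Mathlib

/-- Types of the bracketed Lambek calculus. -/
inductive PTy where
  | prim : ℕ → PTy
  | ldiv : PTy → PTy → PTy   -- ldiv A B = A \ B
  | rdiv : PTy → PTy → PTy   -- rdiv B A = B / A
  | mul  : PTy → PTy → PTy
  | dia  : PTy → PTy
  | box  : PTy → PTy
deriving DecidableEq

/-- Type trees: leaves labeled by types, internal nodes are brackets. -/
inductive PTree where
  | leaf : PTy → PTree
  | node : List PTree → PTree

abbrev PHedge := List PTree

/-- Contexts: a hedge with one distinguished hole. -/
inductive PCtx where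
  | hole : PHedge → PHedge → PCtx
  | brk  : PCtx → PHedge → PHedge → PCtx

/-- Substitution of a hedge for the hole of a context. -/
def PCtx.plug : PCtx → PHedge → PHedge
  | .hole pre post, D => pre ++ D ++ post
  | .brk c pre post, D => pre ++ (PTree.node (c.plug D) :: post)

/-- All primitive types occurring in the type belong to `B`. -/
def PTy.over (B : Finset ℕ) : PTy → Prop
  | .prim p => p ∈ B
  | .ldiv A C => A.over B ∧ C.over B
  | .rdiv C A => C.over B ∧ A.over B
  | .mul A C => A.over B ∧ C.over B
  | .dia A => A.over B
  | .box A => A.over B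

/-- Length of a type. -/
def lenP : PTy → ℕ
  | .prim _ => 1
  | .ldiv A B => lenP A + lenP B
  | .rdiv B A => lenP B + lenP A
  | .mul A B => lenP A + lenP B
  | .dia A => lenP A + 2
  | .box A => lenP A + 2

mutual
/-- The yield of a tree: the sequence of types labeling its leaves. -/
def yieldTree : PTree → List PTy
  | .leaf A => [A]
  | .node ts => yieldHedge ts
/-- The yield of a hedge. -/
def yieldHedge : List PTree → List PTy
  | [] => []
  | t :: ts => yieldTree t ++ yieldHedge ts
end
/-- L◇ : the Lambek calculus with brackets
(the antecedent must be nonempty in the right rules for the divisions). -/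
inductive PProv : PHedge → PTy → Prop where
  | id (p) : PProv [.leaf (.prim p)] (.prim p)
  | ldivL (G : PHedge) (D : PCtx) (A B C) :
      PProv G A → PProv (D.plug [.leaf B]) C →
      PProv (D.plug (G ++ [.leaf (.ldiv A B)])) C
  | ldivR (Pi : PHedge) (A B) : Pi ≠ [] →
      PProv (.leaf A :: Pi) B → PProv Pi (.ldiv A B)
  | rdivL (G : PHedge) (D : PCtx) (A B C) :
      PProv G A → PProv (D.plug [.leaf B]) C →
      PProv (D.plug (.leaf (.rdiv B A) :: G)) C
  | rdivR (Pi : PHedge) (A B) : Pi ≠ [] →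
      PProv (Pi ++ [.leaf A]) B → PProv Pi (.rdiv B A)
  | mulL (G : PCtx) (A B C) :
      PProv (G.plug [.leaf A, .leaf B]) C → PProv (G.plug [.leaf (.mul A B)]) C
  | mulR (G D : PHedge) (A B) :
      PProv G A → PProv D B → PProv (G ++ D) (.mul A B)
  | diaL (G : PCtx) (A B) :
      PProv (G.plug [.node [.leaf A]]) B → PProv (G.plug [.leaf (.dia A)]) B
  | diaR (G : PHedge) (A) :
      PProv G A → PProv [.node G] (.dia A)
  | boxL (G : PCtx) (A B) :
      PProv (G.plug [.leaf A]) B → PProv (G.plug [.node [.leaf (.box A)]]) B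
  | boxR (G : PHedge) (A) :
      PProv [.node G] A → PProv G (.box A)
  | cut (G : PHedge) (D : PCtx) (A B) :
      PProv G A → PProv (D.plug [.leaf A]) B → PProv (D.plug G) B

/-- The language generated by the L◇ grammar `(Σ, I, Dt)`: a word `w` is generated iff
there is an L◇-provable sequent `Γ ⇒ Dt` whose yield is `A_1 ⋯ A_n` with
`(w_i, A_i) ∈ I` for each `i`. -/
def grammarLang {Sig : Type} (I : Finset (Sig × PTy)) (Dt : PTy) : Language Sig :=
  {w | ∃ (G : PHedge) (l : List (Sig × PTy)),
        PProv G Dt ∧ (∀ x ∈ l, x ∈ I) ∧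
        w = l.map Prod.fst ∧ yieldHedge G = l.map Prod.snd}

/-!
Hedges are linearized as words of types with matching brackets. By a phase semantics, which makes
the cut rule admissible in a cut-free calculus, it suffices to obtain all derivable sequents over
the lexicon by cuts from finitely many sequents with at most two antecedent types; these are the
rules of a context-free grammar whose nonterminals are types.

A bracketed factor `⟨D⟩` of the antecedent of `W ⇒ C` splits off: there are subtypes `E`, `F` of the
types of the sequent with `D ⇒ E`, `⟨E⟩ ⇒ F` and `F` replacing `⟨D⟩` in `W ⇒ C`.

For a sequent `A₁ … Aₗ ⇒ C` without brackets and with `l ≥ 3` the argument is that of Pentus. Call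
the primitive types and the modalities labels. The sequent is a relabelling of one in which every
label occurs at most twice, so that an interpolant of a factor `D` of the antecedent contains no
label twice, and its image in the free group over the labels has norm equal to its number of labels.
That image is also the image of `D`, and the four-point condition of the Cayley tree gives a factor
`D`, with at least two but fewer than `l` types, whose image is no longer than the longest type of
the sequent. So types with boundedly many labels, from a fixed finite set, suffice as nonterminals.
-/

namespace LDiamond

open List

/-- Types of a version of `L◇` in which primitive types are drawn from `α` and every modality
carries a label from `β`. -/
inductive LTy (α β : Type*) where
  | prim : α → LTy α β
  | ldiv : LTy α β → LTy α β → LTy α β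
  | rdiv : LTy α β → LTy α β → LTy α β
  | mul : LTy α β → LTy α β → LTy α β
  | dia : β → LTy α β → LTy α β
  | box : β → LTy α β → LTy α β

/-- Letters of a linearized hedge: types, labelled opening brackets and closing brackets. -/
inductive Token (α β : Type*) where
  | ty : LTy α β → Token α β
  | op : β → Token α β
  | cl : Token α β

open LTy Token

/-- Linearized hedges; the genuine ones are those that satisfy `IsBalanced`. -/
abbrev Word (α β : Type*) := List (Token α β)

variable {α β : Type*}

/-- The word `D` enclosed in a pair of brackets labelled `i`. -/
def bracket (i : β) (D : Word α β) : Word α β := op i :: (D ++ [cl])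

/-- The types in a word, in order. -/
@[simp] def types : Word α β → List (LTy α β)
  | [] => []
  | ty A :: w => A :: types w
  | op _ :: w => types w
  | cl :: w => types w

@[simp] theorem types_append (u v : Word α β) : types (u ++ v) = types u ++ types v := by
  induction u with
  | nil => rfl
  | cons t u ih => cases t <;> simp [ih]

@[simp] theorem types_bracket (i : β) (D : Word α β) : types (bracket i D) = types D := by
  simp [bracket]

section Balance

/-- The number of opening brackets minus the number of closing brackets. -/
def height : Word α β → ℤ
  | [] => 0
  | ty _ :: w => height w
  | op _ :: w => height w + 1
  | cl :: w => height w - 1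

/-- The least height of a prefix. -/
def minHeight : Word α β → ℤ
  | [] => 0
  | ty _ :: w => min 0 (minHeight w)
  | op _ :: w => min 0 (minHeight w + 1)
  | cl :: w => min 0 (minHeight w - 1)

/-- The brackets of the word match each other, up to labels (closing brackets have none). -/
def IsBalanced (w : Word α β) : Prop := height w = 0 ∧ minHeight w = 0

@[simp] theorem height_append (u v : Word α β) : height (u ++ v) = height u + height v := by
  induction u with
  | nil => simp [height]
  | cons t u ih => cases t <;> simp only [cons_append, height, ih] <;> ring

theorem minHeight_nonpos (u : Word α β) : minHeight u ≤ 0 := by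
  rcases u with _ | ⟨_ | _ | _, u⟩ <;> simp [minHeight]

@[simp] theorem minHeight_append (u v : Word α β) :
    minHeight (u ++ v) = min (minHeight u) (height u + minHeight v) := by
  induction u with
  | nil => simp [height, minHeight, minHeight_nonpos]
  | cons t u ih => cases t <;> simp only [cons_append, height, minHeight, ih] <;> lia

theorem minHeight_le_height (u : Word α β) : minHeight u ≤ height u := by
  induction u with
  | nil => exact le_rfl
  | cons t u ih => cases t <;> simp only [height, minHeight] <;> lia

@[simp] theorem IsBalanced.nil : IsBalanced ([] : Word α β) := ⟨rfl, rfl⟩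

@[simp] theorem IsBalanced.ty (A : LTy α β) : IsBalanced [ty A] := ⟨rfl, rfl⟩

theorem IsBalanced.append {u v : Word α β} (hu : IsBalanced u) (hv : IsBalanced v) :
    IsBalanced (u ++ v) := by
  simp_all [IsBalanced]

theorem IsBalanced.bracket (i : β) {D : Word α β} (hD : IsBalanced D) :
    IsBalanced (bracket i D) := by
  simp_all [IsBalanced, LDiamond.bracket, height, minHeight]

theorem IsBalanced.swap {X D Y D' : Word α β} (h : IsBalanced (X ++ D ++ Y)) (hD : IsBalanced D)
    (hD' : IsBalanced D') : IsBalanced (X ++ D' ++ Y) := by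
  have := minHeight_nonpos X
  have := minHeight_le_height X
  simp only [IsBalanced, height_append, minHeight_append] at *
  lia

theorem IsBalanced.of_append_left {u v : Word α β} (h : IsBalanced (u ++ v))
    (hu : IsBalanced u) : IsBalanced v := by
  have := minHeight_nonpos v
  simp only [IsBalanced, height_append, minHeight_append] at *
  lia

theorem IsBalanced.of_append_right {u v : Word α β} (h : IsBalanced (u ++ v))
    (hv : IsBalanced v) : IsBalanced u := by
  have := minHeight_nonpos u
  simp only [IsBalanced, height_append, minHeight_append] at *
  lia

theorem IsBalanced.overlap {d g n : Word α β} (hdg : IsBalanced (d ++ g))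
    (hgn : IsBalanced (g ++ n)) :
    IsBalanced d ∧ IsBalanced g ∧ IsBalanced n := by
  have := minHeight_nonpos d
  have := minHeight_nonpos g
  have := minHeight_nonpos n
  have := minHeight_le_height d
  have := minHeight_le_height g
  simp only [IsBalanced, height_append, minHeight_append] at *
  lia

theorem bracket_eq_append {i : β} {D u N v : Word α β} (h : bracket i D = u ++ N ++ v)
    (hu : u ≠ []) (hv : v ≠ []) : ∃ a b, u = op i :: a ∧ v = b ++ [cl] ∧ D = a ++ N ++ b := by
  obtain ⟨a, rfl⟩ : ∃ a, u = op i :: a := by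
    rcases u with _ | ⟨t, a⟩ <;> simp_all [bracket]
  obtain ⟨b, rfl⟩ : ∃ b, v = b ++ [cl] := by
    obtain ⟨b, t, rfl⟩ := eq_nil_or_concat v |>.resolve_left hv
    have := congrArg getLast? h
    exact ⟨b, by simp_all [bracket, ← append_assoc]⟩
  exact ⟨a, b, rfl, rfl, by simpa [bracket, ← append_assoc] using h⟩

theorem bracket_irreducible {i : β} {D u v : Word α β} (hD : IsBalanced D)
    (h : bracket i D = u ++ v) (hu : IsBalanced u) : u = [] ∨ v = [] := by
  by_contra! hne
  obtain ⟨a, b, rfl, rfl, rfl⟩ := bracket_eq_append (N := []) (by simpa using h) hne.1 hne.2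
  have := minHeight_le_height a
  simp only [IsBalanced, height, minHeight, height_append, minHeight_append] at *
  lia

end Balance

section Overlap

variable {γ : Type*} {X N Y X' D Y' : List γ}

theorem factor_cases (h : X ++ N ++ Y = X' ++ D ++ Y') :
    (∃ Z, X' = X ++ N ++ Z ∧ Y = Z ++ D ++ Y') ∨
    (∃ Z, X = X' ++ D ++ Z ∧ Y' = Z ++ N ++ Y) ∨
    (∃ a b, D = a ++ N ++ b ∧ X = X' ++ a ∧ Y = b ++ Y') ∨
    (∃ d g n, D = d ++ g ∧ N = g ++ n ∧ g ≠ [] ∧ n ≠ [] ∧ X = X' ++ d ∧ Y' = n ++ Y) ∨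
    (∃ n g d, N = n ++ g ∧ D = g ++ d ∧ n ≠ [] ∧ g ≠ [] ∧ X' = X ++ n ∧ Y = d ++ Y') ∨
    (∃ m n, N = m ++ D ++ n ∧ m ≠ [] ∧ n ≠ [] ∧ X' = X ++ m ∧ Y' = n ++ Y) := by
  simp only [append_assoc] at h
  rcases append_eq_append_iff.1 h with ⟨a, hX, h⟩ | ⟨a, hX, h⟩ <;>
    rcases append_eq_append_iff.1 h with ⟨b, hN, h⟩ | ⟨b, hN, h⟩
  · grind
  · rcases append_eq_append_iff.1 h with ⟨c, hb, h⟩ | ⟨c, hb, h⟩ <;>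
      by_cases a = [] <;> by_cases b = [] <;> by_cases c = [] <;> grind
  · grind
  · rcases append_eq_append_iff.1 h with ⟨c, hb, h⟩ | ⟨c, hb, h⟩ <;>
      by_cases a = [] <;> by_cases b = [] <;> by_cases c = [] <;> grind

theorem factor_append_cases {G H : List γ} (h : G ++ H = X ++ D ++ Y) :
    (∃ n, G = X ++ D ++ n ∧ Y = n ++ H) ∨
    (∃ m, X = G ++ m ∧ H = m ++ D ++ Y) ∨
    (∃ d g, D = d ++ g ∧ d ≠ [] ∧ g ≠ [] ∧ G = X ++ d ∧ H = g ++ Y) := by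
  rcases append_eq_append_iff.1 h with ⟨c, hc, rfl⟩ | ⟨c, rfl, rfl⟩
  · rcases append_eq_append_iff.1 hc with ⟨d, hd, hc⟩ | ⟨d, hd, hc⟩ <;>
      by_cases d = [] <;> by_cases c = [] <;> grind
  · exact .inl ⟨c, rfl, rfl⟩

end Overlap

section Calculus

/-- The left rules read from the conclusion to the premise: the factor `N` of the antecedent is
replaced by `M`. The minor premise of a division rule is required to satisfy `Q`. -/
inductive LeftStep (Q : Word α β → LTy α β → Prop) : Word α β → Word α β → Prop
  | ldiv {G A} (B) : Q G A → LeftStep Q (G ++ [ty (ldiv A B)]) [ty B]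
  | rdiv {G A} (B) : Q G A → LeftStep Q (ty (rdiv B A) :: G) [ty B]
  | mul (A B) : LeftStep Q [ty (mul A B)] [ty A, ty B]
  | dia (i A) : LeftStep Q [ty (dia i A)] (bracket i [ty A])
  | box (i A) : LeftStep Q (bracket i [ty (box i A)]) [ty A]

/-- Cut-free derivability of sequents with a linearized antecedent. -/
inductive Derivable : Word α β → LTy α β → Prop
  | id (p) : Derivable [ty (prim p)] (prim p)
  | left (X Y : Word α β) {N M C} : LeftStep Derivable N M → Derivable (X ++ M ++ Y) C →
      Derivable (X ++ N ++ Y) C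
  | ldivR {G A B} : G ≠ [] → Derivable (ty A :: G) B → Derivable G (ldiv A B)
  | rdivR {G A B} : G ≠ [] → Derivable (G ++ [ty A]) B → Derivable G (rdiv B A)
  | mulR {G D A B} : Derivable G A → Derivable D B → Derivable (G ++ D) (mul A B)
  | diaR (i) {G A} : Derivable G A → Derivable (bracket i G) (dia i A)
  | boxR {i G A} : G ≠ [] → IsBalanced G → Derivable (bracket i G) A → Derivable G (box i A)

theorem LeftStep.mono {Q R : Word α β → LTy α β → Prop} (hQR : ∀ G A, Q G A → R G A)
    {N M : Word α β} (h : LeftStep Q N M) : LeftStep R N M := by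
  cases h with
  | ldiv B hG => exact .ldiv B (hQR _ _ hG)
  | rdiv B hG => exact .rdiv B (hQR _ _ hG)
  | mul A B => exact .mul A B
  | dia i A => exact .dia i A
  | box i A => exact .box i A

@[induction_eliminator]
theorem Derivable.induction {motive : (W : Word α β) → (C : LTy α β) → Derivable W C → Prop}
    (id : ∀ p, motive [ty (prim p)] (prim p) (.id p))
    (left : ∀ X Y {N M C} (step : LeftStep Derivable N M) (h : Derivable (X ++ M ++ Y) C),
      LeftStep (fun G A => ∃ h, motive G A h) N M → motive _ _ h → motive _ _ (.left X Y step h))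
    (ldivR : ∀ {G A B} (ne : G ≠ []) (h : Derivable (ty A :: G) B), motive _ _ h →
      motive _ _ (.ldivR ne h))
    (rdivR : ∀ {G A B} (ne : G ≠ []) (h : Derivable (G ++ [ty A]) B), motive _ _ h →
      motive _ _ (.rdivR ne h))
    (mulR : ∀ {G D A B} (hG : Derivable G A) (hD : Derivable D B), motive _ _ hG → motive _ _ hD →
      motive _ _ (.mulR hG hD))
    (diaR : ∀ i {G A} (h : Derivable G A), motive _ _ h → motive _ _ (.diaR i h))
    (boxR : ∀ {i G A} (ne : G ≠ []) (hG : IsBalanced G) (h : Derivable (bracket i G) A),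
      motive _ _ h → motive _ _ (.boxR ne hG h))
    {W : Word α β} {C : LTy α β} (h : Derivable W C) : motive W C h := by
  induction h using Derivable.rec
    (motive_2 := fun N M _ => LeftStep (fun G A => ∃ h, motive G A h) N M) with
  | id p => exact id p
  | left X Y step h ih_step ih => exact left X Y step h ih_step ih
  | ldivR ne h ih => exact ldivR ne h ih
  | rdivR ne h ih => exact rdivR ne h ih
  | mulR hG hD ihG ihD => exact mulR hG hD ihG ihD
  | diaR i h ih => exact diaR i h ih
  | boxR ne hG h ih => exact boxR ne hG h ih
  | ldiv B hG ih => exact .ldiv B ⟨hG, ih⟩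
  | rdiv B hG ih => exact .rdiv B ⟨hG, ih⟩
  | mul A B => exact .mul A B
  | dia i A => exact .dia i A
  | box i A => exact .box i A

theorem LeftStep.ne_nil_left {Q : Word α β → LTy α β → Prop} {N M : Word α β} (h : LeftStep Q N M) :
    N ≠ [] := by
  cases h <;> simp [bracket]

theorem LeftStep.ne_nil_right {Q : Word α β → LTy α β → Prop} {N M : Word α β}
    (h : LeftStep Q N M) : M ≠ [] := by
  cases h <;> simp [bracket]

theorem LeftStep.isBalanced {N M : Word α β} (h : LeftStep (fun G _ => IsBalanced G) N M) :
    IsBalanced N ∧ IsBalanced M := by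
  cases h with
  | ldiv B hG => exact ⟨hG.append (.ty _), .ty _⟩
  | rdiv B hG => exact ⟨.append (.ty _) hG, .ty _⟩
  | mul A B => exact ⟨.ty _, .append (.ty A) (.ty B)⟩
  | dia i A => exact ⟨.ty _, .bracket i (.ty A)⟩
  | box i A => exact ⟨.bracket i (.ty _), .ty A⟩

theorem Derivable.ne_nil {W : Word α β} {C : LTy α β} (h : Derivable W C) : W ≠ [] := by
  induction h with
  | left X Y _ _ step => simp [step.ne_nil_left]
  | mulR | diaR | id => simp_all [bracket]
  | ldivR ne | rdivR ne | boxR ne => exact ne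

theorem Derivable.isBalanced {W : Word α β} {C : LTy α β} (h : Derivable W C) :
    IsBalanced W := by
  induction h with
  | id p => exact .ty _
  | left X Y _ _ step ih =>
    obtain ⟨hN, hM⟩ := (step.mono fun _ _ h => h.2).isBalanced
    exact ih.swap hM hN
  | ldivR _ _ ih => exact IsBalanced.of_append_left (u := [_]) ih (.ty _)
  | rdivR _ _ ih => exact ih.of_append_right (.ty _)
  | mulR _ _ ihG ihD => exact ihG.append ihD
  | diaR i _ ih => exact ih.bracket i
  | boxR _ hG => exact hG

theorem Derivable.refl (A : LTy α β) : Derivable [ty A] A := by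
  induction A with
  | prim p => exact .id p
  | ldiv A B ihA ihB => exact .ldivR (by simp) (.left [] [] (.ldiv B ihA) ihB)
  | rdiv B A ihB ihA => exact .rdivR (by simp) (.left [] [] (.rdiv B ihA) ihB)
  | mul A B ihA ihB => exact .left [] [] (.mul A B) (.mulR (G := [_]) ihA ihB)
  | dia i A ih => exact .left [] [] (.dia i A) (.diaR i ih)
  | box i A ih => exact .boxR (by simp) (.ty _) (.left [] [] (.box i A) ih)

end Calculus

section BracketSplitting

/-- A bracketed factor is irreducible, so it cannot overlap a balanced one properly. -/
theorem bracket_cases {i : β} {X N Y X' D Y' : Word α β} (hN : IsBalanced N) (hne : N ≠ [])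
    (hD : IsBalanced D) (h : X ++ N ++ Y = X' ++ bracket i D ++ Y') :
    (∃ Z, X' = X ++ N ++ Z ∧ Y = Z ++ bracket i D ++ Y') ∨
    (∃ Z, X = X' ++ bracket i D ++ Z ∧ Y' = Z ++ N ++ Y) ∨
    (∃ a b, D = a ++ N ++ b ∧ X = X' ++ op i :: a ∧ Y = b ++ cl :: Y') ∨
    (∃ m n, N = m ++ bracket i D ++ n ∧ X' = X ++ m ∧ Y' = n ++ Y) := by
  rcases factor_cases h with h' | h' | ⟨a, b, hB, rfl, rfl⟩ | ⟨d, g, n, hB, rfl, hg, -, rfl, rfl⟩ |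
    ⟨n, g, d, rfl, hB, -, hg, rfl, rfl⟩ | ⟨m, n, rfl, -, -, rfl, rfl⟩
  · exact .inl h'
  · exact .inr (.inl h')
  · rcases eq_or_ne a [] with rfl | ha
    · obtain rfl : b = [] := (bracket_irreducible hD hB hN).resolve_left (by simpa using hne)
      exact .inr (.inr (.inr ⟨[], [], by simp [hB], by simp, by simp⟩))
    rcases eq_or_ne b [] with rfl | hb
    · rw [append_nil] at hB
      have := bracket_irreducible hD hB ((hB ▸ hD.bracket i).of_append_right hN)
      simp_all
    obtain ⟨a, b, rfl, rfl, rfl⟩ := bracket_eq_append hB ha hb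
    exact .inr (.inr (.inl ⟨a, b, by simp⟩))
  · obtain ⟨hd, -, -⟩ := IsBalanced.overlap (hB ▸ hD.bracket i) hN
    obtain rfl := (bracket_irreducible hD hB hd).resolve_right hg
    exact .inr (.inr (.inr ⟨[], n, by simp [hB], by simp, by simp⟩))
  · obtain ⟨-, hg', -⟩ := IsBalanced.overlap hN (hB ▸ hD.bracket i)
    obtain rfl := (bracket_irreducible hD hB hg').resolve_left hg
    exact .inr (.inr (.inr ⟨n, [], by simp [hB], by simp, by simp⟩))
  · exact .inr (.inr (.inr ⟨m, n, rfl, rfl, rfl⟩))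

theorem bracket_eq_append_balanced {j : β} {G X N Y : Word α β} (hG : IsBalanced G)
    (hN : IsBalanced N) (hne : N ≠ []) (h : bracket j G = X ++ N ++ Y) :
    (X = [] ∧ Y = [] ∧ N = bracket j G) ∨
      ∃ a b, X = op j :: a ∧ Y = b ++ [cl] ∧ G = a ++ N ++ b := by
  rcases eq_or_ne X [] with rfl | hX
  · obtain rfl := (bracket_irreducible hG h hN).resolve_left hne
    simp_all
  rcases eq_or_ne Y [] with rfl | hY
  · rw [append_nil] at h
    have := bracket_irreducible hG h ((h ▸ hG.bracket j).of_append_right hN)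
    simp_all
  · exact .inr (bracket_eq_append h hX hY)

/-- A set of types that contains the immediate subtypes of each of its members. -/
structure SubtypeClosed (S : Set (LTy α β)) : Prop where
  ldiv : ∀ {A B}, LTy.ldiv A B ∈ S → A ∈ S ∧ B ∈ S
  rdiv : ∀ {A B}, LTy.rdiv B A ∈ S → B ∈ S ∧ A ∈ S
  mul : ∀ {A B}, LTy.mul A B ∈ S → A ∈ S ∧ B ∈ S
  dia : ∀ {i A}, LTy.dia i A ∈ S → A ∈ S
  box : ∀ {i A}, LTy.box i A ∈ S → A ∈ S

/-- The factor `bracket i D` of the antecedent of `X ++ bracket i D ++ Y ⇒ C` can be replaced by a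
single type from `S`, and the derivation of that type from `bracket i D` factors through a type
derivable from `D` alone. -/
def BracketSplits (S : Set (LTy α β)) (X : Word α β) (i : β) (D Y : Word α β) (C : LTy α β) :
    Prop :=
  ∃ E ∈ S, ∃ F ∈ S, Derivable D E ∧ Derivable (bracket i [ty E]) F ∧ Derivable (X ++ [ty F] ++ Y) C

variable {S : Set (LTy α β)}

theorem SubtypeClosed.of_leftStep (hS : SubtypeClosed S) {Q : Word α β → LTy α β → Prop}
    {N M : Word α β} (step : LeftStep Q N M) (hN : ∀ A ∈ types N, A ∈ S) :
    ∀ A ∈ types M, A ∈ S := by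
  cases step with
  | @ldiv _ A B => simpa using (hS.ldiv (hN (.ldiv A B) (by simp))).2
  | rdiv B hG => simpa using (hS.rdiv (hN _ mem_cons_self)).1
  | mul A B => simpa using hS.mul (hN _ mem_cons_self)
  | dia i A => simpa using hS.dia (hN _ mem_cons_self)
  | box i A => simpa using hS.box (hN _ mem_cons_self)

/-- Every bracketed balanced factor of the antecedent of `W ⇒ C` splits off, provided all types of
the sequent are in `S`. -/
def HasBracketSplits (S : Set (LTy α β)) (W : Word α β) (C : LTy α β) : Prop :=
  ∀ X i D Y, W = X ++ bracket i D ++ Y → IsBalanced D → (∀ A ∈ types W, A ∈ S) → C ∈ S →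
    BracketSplits S X i D Y C

theorem append_bracket_eq_concat_ty {m D n G : Word α β} {i : β} {A : LTy α β}
    (h : m ++ bracket i D ++ n = G ++ [ty A]) :
    ∃ n', n = n' ++ [ty A] ∧ G = m ++ bracket i D ++ n' := by
  rcases eq_nil_or_concat n with rfl | ⟨n', t, rfl⟩
  · simpa [bracket] using congrArg reverse h
  · rw [concat_eq_append, ← append_assoc] at h
    obtain ⟨rfl, ht⟩ := append_inj' h rfl
    exact ⟨n', by simpa using ht, rfl⟩

theorem append_bracket_eq_ty_cons {m D n G : Word α β} {i : β} {A : LTy α β}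
    (h : m ++ bracket i D ++ n = ty A :: G) :
    ∃ m', m = ty A :: m' ∧ G = m' ++ bracket i D ++ n := by
  rcases m with _ | ⟨t, m'⟩ <;> simp_all [bracket]

theorem BracketSplits.of_inner_leftStep (hS : SubtypeClosed S) {i : β}
    {X Y m D n M : Word α β} {C : LTy α β} (hD : IsBalanced D)
    (step : LeftStep (fun G A => ∃ _ : Derivable G A, HasBracketSplits S G A)
      (m ++ bracket i D ++ n) M)
    (h : Derivable (X ++ M ++ Y) C) (hN : ∀ A ∈ types (m ++ bracket i D ++ n), A ∈ S) :
    BracketSplits S (X ++ m) i D (n ++ Y) C := by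
  generalize hW : m ++ bracket i D ++ n = N at step hN
  cases step with
  | @ldiv G A B hG =>
    obtain ⟨n', rfl, rfl⟩ := append_bracket_eq_concat_ty hW
    obtain ⟨E, hE, F, hF, hDE, hEF, hA⟩ :=
      hG.2 _ _ _ _ rfl hD (fun A' hA' => hN A' (by rw [types_append]; exact mem_append_left _ hA'))
        (hS.ldiv (hN (.ldiv A B) (by simp))).1
    exact ⟨E, hE, F, hF, hDE, hEF, by simpa using Derivable.left X Y (.ldiv B hA) h⟩
  | @rdiv G A B hG =>
    obtain ⟨m', rfl, rfl⟩ := append_bracket_eq_ty_cons hW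
    obtain ⟨E, hE, F, hF, hDE, hEF, hA⟩ :=
      hG.2 _ _ _ _ rfl hD (fun A' hA' => hN A' (mem_cons_of_mem _ hA'))
        (hS.rdiv (hN _ mem_cons_self)).2
    exact ⟨E, hE, F, hF, hDE, hEF, by simpa using Derivable.left X Y (.rdiv B hA) h⟩
  | mul | dia =>
    have := congrArg length hW
    simp only [bracket, length_append, length_cons, length_nil] at this
    lia
  | box j A =>
    obtain ⟨rfl, rfl, rfl, rfl⟩ : m = [] ∧ n = [] ∧ i = j ∧ D = [ty (box j A)] := by
      rcases m with _ | ⟨_, _ | ⟨_, _⟩⟩ <;> rcases D with _ | ⟨_, _ | ⟨_, _⟩⟩ <;>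
        simp_all [bracket, append_eq_cons_iff]
    have hbox : box i A ∈ S := hN _ (by simp)
    exact ⟨_, hbox, A, hS.box hbox, .refl _, .left [] [] (.box i A) (.refl A), by simpa using h⟩

theorem HasBracketSplits.left (hS : SubtypeClosed S) {X Y N M : Word α β} {C : LTy α β}
    (step : LeftStep (fun G A => ∃ _ : Derivable G A, HasBracketSplits S G A) N M)
    (h : Derivable (X ++ M ++ Y) C) (ih : HasBracketSplits S (X ++ M ++ Y) C) :
    HasBracketSplits S (X ++ N ++ Y) C := by
  intro X' i D Y' hW hD hWS hC
  have step' : LeftStep Derivable N M := step.mono fun _ _ h => h.1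
  obtain ⟨hN, hM⟩ := (step'.mono fun _ _ h => h.isBalanced).isBalanced
  have hMS : ∀ A ∈ types (X ++ M ++ Y), A ∈ S := by
    have := hS.of_leftStep step
    simp only [types_append, forall_mem_append] at this hWS ⊢
    exact ⟨⟨hWS.1.1, this hWS.1.2⟩, hWS.2⟩
  rcases bracket_cases hN step.ne_nil_left hD hW with ⟨Z, rfl, rfl⟩ | ⟨Z, rfl, rfl⟩ |
    ⟨a, b, rfl, rfl, rfl⟩ | ⟨m, n, rfl, rfl, rfl⟩
  · obtain ⟨E, hE, F, hF, hDE, hEF, hC⟩ := ih (X ++ M ++ Z) i D Y' (by simp) hD hMS hC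
    exact ⟨E, hE, F, hF, hDE, hEF,
      by simpa using Derivable.left X (Z ++ [ty F] ++ Y') step' (by simpa using hC)⟩
  · obtain ⟨E, hE, F, hF, hDE, hEF, hC⟩ := ih X' i D (Z ++ M ++ Y) (by simp) hD hMS hC
    exact ⟨E, hE, F, hF, hDE, hEF,
      by simpa using Derivable.left (X' ++ [ty F] ++ Z) Y step' (by simpa using hC)⟩
  · obtain ⟨E, hE, F, hF, hDE, hEF, hC⟩ :=
      ih X' i (a ++ M ++ b) Y' (by simp [bracket]) (hD.swap hN hM) hMS hC
    exact ⟨E, hE, F, hF, .left a b step' hDE, hEF, hC⟩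
  · exact .of_inner_leftStep hS hD step h fun A hA => hWS A (by
      rw [types_append, types_append X]; exact mem_append_left _ (mem_append_right _ hA))

theorem HasBracketSplits.mulR (hS : SubtypeClosed S) {G H : Word α β} {A B : LTy α β}
    (hG : Derivable G A) (hH : Derivable H B) (ihG : HasBracketSplits S G A)
    (ihH : HasBracketSplits S H B) : HasBracketSplits S (G ++ H) (mul A B) := by
  intro X i D Y hW hD hWS hC
  obtain ⟨hA, hB⟩ := hS.mul hC
  rw [types_append, forall_mem_append] at hWS
  rcases bracket_cases (X := []) hG.isBalanced hG.ne_nil hD hW with ⟨Z, rfl, rfl⟩ |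
    ⟨Z, h, -⟩ | ⟨a, b, -, h, -⟩ | ⟨m, n, rfl, hX, rfl⟩
  · obtain ⟨E, hE, F, hF, hDE, hEF, h⟩ := ihH Z i D Y rfl hD hWS.2 hB
    exact ⟨E, hE, F, hF, hDE, hEF, by simpa using Derivable.mulR hG h⟩
  · simp [bracket] at h
  · simp at h
  · obtain ⟨E, hE, F, hF, hDE, hEF, h⟩ := ihG m i D n rfl hD hWS.1 hA
    exact ⟨E, hE, F, hF, hDE, hEF, by simpa [hX] using Derivable.mulR h hH⟩

theorem HasBracketSplits.diaR (hS : SubtypeClosed S) (j : β) {G : Word α β} {A : LTy α β}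
    (h : Derivable G A) (ih : HasBracketSplits S G A) :
    HasBracketSplits S (bracket j G) (dia j A) := by
  intro X i D Y hW hD hWS hC
  rw [types_bracket] at hWS
  rcases bracket_eq_append_balanced h.isBalanced (hD.bracket i) (by simp [bracket]) hW with
    ⟨rfl, rfl, hDG⟩ | ⟨a, b, rfl, rfl, rfl⟩
  · obtain ⟨rfl, rfl⟩ : i = j ∧ D = G := by simpa [bracket] using hDG
    exact ⟨A, hS.dia hC, _, hC, h, .diaR _ (.refl A), .refl _⟩
  · obtain ⟨E, hE, F, hF, hDE, hEF, h⟩ := ih a i D b rfl hD hWS (hS.dia hC)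
    exact ⟨E, hE, F, hF, hDE, hEF, by simpa [bracket] using Derivable.diaR j h⟩

theorem Derivable.hasBracketSplits (hS : SubtypeClosed S) {W : Word α β} {C : LTy α β}
    (h : Derivable W C) : HasBracketSplits S W C := by
  induction h with
  | id p =>
    intro X i D Y hW
    rcases X with _ | ⟨_, _⟩ <;> simp [bracket] at hW
  | left X Y _ h step ih => exact .left hS step h ih
  | @ldivR G A B ne h ih =>
    rintro X i D Y rfl hD hW hC
    obtain ⟨hA, hB⟩ := hS.ldiv hC
    obtain ⟨E, hE, F, hF, hDE, hEF, h⟩ :=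
      ih (ty A :: X) i D Y (by simp) hD (forall_mem_cons.2 ⟨hA, hW⟩) hB
    exact ⟨E, hE, F, hF, hDE, hEF, .ldivR (by simp) h⟩
  | @rdivR G A B ne h ih =>
    rintro X i D Y rfl hD hW hC
    obtain ⟨hB, hA⟩ := hS.rdiv hC
    obtain ⟨E, hE, F, hF, hDE, hEF, h⟩ :=
      ih X i D (Y ++ [ty A]) (by simp) hD (by simp_all [or_imp, forall_and, types]) hB
    exact ⟨E, hE, F, hF, hDE, hEF, .rdivR (by simp) (by simpa using h)⟩
  | mulR hG hD ihG ihD => exact .mulR hS hG hD ihG ihD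
  | diaR i h ih => exact .diaR hS i h ih
  | @boxR j G A ne hG h ih =>
    rintro X i D Y rfl hD hW hC
    obtain ⟨E, hE, F, hF, hDE, hEF, h⟩ := ih (op j :: X) i D (Y ++ [cl]) (by simp [bracket]) hD
      (by rwa [types_bracket]) (hS.box hC)
    refine ⟨E, hE, F, hF, hDE, hEF, .boxR (by simp) (hG.swap (hD.bracket _) (.ty F)) ?_⟩
    simpa [bracket] using h

theorem SubtypeClosed.univ : SubtypeClosed (Set.univ : Set (LTy α β)) := by
  constructor <;> simp

theorem not_derivable_bracket_nil (i : β) (C : LTy α β) : ¬ Derivable (bracket i []) C := by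
  intro h
  obtain ⟨E, -, -, -, hE, -⟩ :=
    h.hasBracketSplits .univ [] i [] [] (by simp) .nil (by simp) (Set.mem_univ C)
  exact hE.ne_nil rfl

end BracketSplitting

section Interpolation

/-- The primitive types and the modality labels of a type, with multiplicities. -/
def LTy.labels : LTy α β → Multiset (α ⊕ β)
  | prim p => {.inl p}
  | ldiv A B => A.labels + B.labels
  | rdiv B A => B.labels + A.labels
  | mul A B => A.labels + B.labels
  | dia i A => {.inr i} + A.labels
  | box i A => {.inr i} + A.labels

/-- The labels of all types and opening brackets of a word, with multiplicities. -/
def labels : Word α β → Multiset (α ⊕ β)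
  | [] => 0
  | ty A :: w => A.labels + labels w
  | op i :: w => {.inr i} + labels w
  | cl :: w => labels w

@[simp] theorem labels_append (u v : Word α β) : labels (u ++ v) = labels u + labels v := by
  induction u with
  | nil => simp [labels]
  | cons t u ih => cases t <;> simp [labels, ih, add_assoc]

@[simp] theorem labels_bracket (i : β) (D : Word α β) :
    labels (bracket i D) = {.inr i} + labels D := by
  simp [bracket, labels]

attribute [local grind =] labels LTy.labels labels_append labels_bracket Multiset.le_iff_count
  Multiset.count_add

theorem LeftStep.labels_le {Q : Word α β → LTy α β → Prop} {N M : Word α β}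
    (step : LeftStep Q N M) : labels M ≤ labels N := by
  classical
  cases step <;> grind

/-- The type `E` interpolates the factor `D` of the antecedent of `X ++ D ++ Y ⇒ C`: it can be cut
in for `D`, and each label occurs in `E` at most as often as in `D` and as in the rest. -/
structure Interpolates (X D Y : Word α β) (C E : LTy α β) : Prop where
  inner : Derivable D E
  outer : Derivable (X ++ [ty E] ++ Y) C
  labels_le_inner : E.labels ≤ labels D
  labels_le_outer : E.labels ≤ labels X + labels Y + C.labels

/-- The sequent `W ⇒ C` is derivable, and every nonempty balanced factor of its antecedent has an
interpolant. -/
structure Interpolable (W : Word α β) (C : LTy α β) : Prop where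
  derivable : Derivable W C
  exists_interpolates : ∀ X D Y, W = X ++ D ++ Y → D ≠ [] → IsBalanced D →
    ∃ E, Interpolates X D Y C E

attribute [local grind →] LeftStep.labels_le Interpolates.labels_le_inner
  Interpolates.labels_le_outer

variable {X N M Y D : Word α β} {C : LTy α β}

theorem eq_concat_of_append_eq_concat {γ : Type*} {u v w : List γ} {t : γ}
    (h : u ++ v = w ++ [t]) (hv : v ≠ []) : ∃ v', v = v' ++ [t] ∧ w = u ++ v' := by
  obtain ⟨v', s, rfl⟩ := (eq_nil_or_concat' v).resolve_left hv
  rw [← append_assoc] at h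
  obtain ⟨rfl, hs⟩ := append_inj' h rfl
  exact ⟨v', by simpa using hs, rfl⟩

theorem eq_cons_of_append_eq_cons {γ : Type*} {u v w : List γ} {t : γ}
    (h : u ++ v = t :: w) (hu : u ≠ []) : ∃ u', u = t :: u' ∧ w = u' ++ v := by
  rcases u with _ | ⟨s, u'⟩ <;> simp_all

theorem Interpolates.of_prefix_overlap {d g n : Word α β} (step : LeftStep Interpolable (g ++ n) M)
    (h : Interpolable (X ++ d ++ M ++ Y) C) (hD : IsBalanced (d ++ g)) (hN : IsBalanced (g ++ n))
    (hg : g ≠ []) (hn : n ≠ []) : ∃ E, Interpolates X (d ++ g) (n ++ Y) C E := by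
  classical
  obtain ⟨hd, hg', hn'⟩ := IsBalanced.overlap hD hN
  generalize hW : g ++ n = N at step
  cases step with
  | @ldiv G A B hG =>
    obtain ⟨n, rfl, rfl⟩ := eq_concat_of_append_eq_concat hW hn
    obtain ⟨F, hF⟩ := hG.exists_interpolates [] g n (by simp) hg hg'
    rcases eq_or_ne d [] with rfl | hd'
    · refine ⟨F, hF.inner, ?_, hF.labels_le_inner, ?_⟩
      · simpa using Derivable.left X Y (.ldiv B hF.outer) (by simpa using h.derivable)
      · grind
    · obtain ⟨H, hH⟩ := h.exists_interpolates X d (ty B :: Y) (by simp) hd' hd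
      refine ⟨mul H F, .mulR hH.inner hF.inner, ?_, ?_, ?_⟩
      · refine .left X _ (.mul H F) ?_
        simpa using Derivable.left (X ++ [ty H]) Y (.ldiv B hF.outer) (by simpa using hH.outer)
      all_goals grind
  | @rdiv G A B hG =>
    obtain ⟨g, rfl, rfl⟩ := eq_cons_of_append_eq_cons hW hg
    obtain ⟨F, hF⟩ := hG.exists_interpolates g n [] (by simp) hn hn'
    obtain ⟨H, hH⟩ := h.exists_interpolates X (d ++ [ty B]) Y (by simp) (by simp)
      (hd.append (.ty B))
    refine ⟨rdiv H F, .rdivR (by simp) ?_, ?_, ?_, ?_⟩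
    · simpa using Derivable.left d [] (.rdiv B hF.outer) (by simpa using hH.inner)
    · simpa using Derivable.left X Y (.rdiv H hF.inner) hH.outer
    all_goals grind
  | mul | dia => simp_all [append_eq_singleton_iff]
  | box => simpa [hg, hn] using bracket_irreducible (.ty _) hW.symm hg'

theorem Interpolates.of_suffix_overlap {d g n : Word α β} (step : LeftStep Interpolable (n ++ g) M)
    (h : Interpolable (X ++ M ++ d ++ Y) C) (hD : IsBalanced (g ++ d)) (hN : IsBalanced (n ++ g))
    (hg : g ≠ []) (hn : n ≠ []) : ∃ E, Interpolates (X ++ n) (g ++ d) Y C E := by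
  classical
  obtain ⟨hn', hg', hd⟩ := IsBalanced.overlap hN hD
  generalize hW : n ++ g = N at step
  cases step with
  | @rdiv G A B hG =>
    obtain ⟨n, rfl, rfl⟩ := eq_cons_of_append_eq_cons hW hn
    obtain ⟨F, hF⟩ := hG.exists_interpolates n g [] (by simp) hg hg'
    rcases eq_or_ne d [] with rfl | hd'
    · refine ⟨F, by simpa using hF.inner, ?_, by simpa using hF.labels_le_inner, ?_⟩
      · simpa using Derivable.left X Y (.rdiv B hF.outer) (by simpa using h.derivable)
      · grind
    · obtain ⟨H, hH⟩ := h.exists_interpolates (X ++ [ty B]) d Y (by simp) hd' hd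
      refine ⟨mul F H, .mulR hF.inner hH.inner, ?_, ?_, ?_⟩
      · refine .left _ Y (.mul F H) ?_
        simpa using Derivable.left X ([ty H] ++ Y) (.rdiv B hF.outer) (by simpa using hH.outer)
      all_goals grind
  | @ldiv G A B hG =>
    obtain ⟨g, rfl, rfl⟩ := eq_concat_of_append_eq_concat hW hg
    obtain ⟨F, hF⟩ := hG.exists_interpolates [] n g (by simp) hn hn'
    obtain ⟨H, hH⟩ := h.exists_interpolates X (ty B :: d) Y (by simp) (by simp)
      (IsBalanced.append (.ty B) hd)
    refine ⟨ldiv F H, .ldivR (by simp) ?_, ?_, ?_, ?_⟩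
    · simpa using Derivable.left [] d (.ldiv B hF.outer) (by simpa using hH.inner)
    · simpa using Derivable.left X Y (.ldiv H hF.inner) hH.outer
    all_goals grind
  | mul | dia => simp_all [append_eq_singleton_iff]
  | box => simpa [hg, hn] using bracket_irreducible (.ty _) hW.symm hn'

theorem Interpolates.of_inner {m n : Word α β} (step : LeftStep Interpolable (m ++ D ++ n) M)
    (h : Interpolable (X ++ M ++ Y) C) (hD : IsBalanced D) (hne : D ≠ []) (hm : m ≠ [])
    (hn : n ≠ []) : ∃ E, Interpolates (X ++ m) D (n ++ Y) C E := by
  classical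
  generalize hW : m ++ D ++ n = N at step
  cases step with
  | @ldiv G A B hG =>
    obtain ⟨n, rfl, rfl⟩ := eq_concat_of_append_eq_concat hW hn
    obtain ⟨F, hF⟩ := hG.exists_interpolates m D n rfl hne hD
    refine ⟨F, hF.inner, ?_, hF.labels_le_inner, ?_⟩
    · simpa using Derivable.left X Y (.ldiv B hF.outer) h.derivable
    · grind
  | @rdiv G A B hG =>
    rw [append_assoc] at hW
    obtain ⟨m, rfl, rfl⟩ := eq_cons_of_append_eq_cons hW hm
    obtain ⟨F, hF⟩ := hG.exists_interpolates m D n (by simp) hne hD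
    refine ⟨F, hF.inner, ?_, hF.labels_le_inner, ?_⟩
    · simpa using Derivable.left X Y (.rdiv B hF.outer) h.derivable
    · grind
  | mul | dia => simp_all [append_eq_singleton_iff]
  | box i A =>
    obtain ⟨a, b, rfl, rfl, hA⟩ := bracket_eq_append hW.symm hm hn
    obtain ⟨rfl, rfl, rfl⟩ : a = [] ∧ D = [ty (box i A)] ∧ b = [] := by
      simpa [append_eq_singleton_iff, singleton_eq_append_iff, hne] using hA
    obtain ⟨F, hF⟩ := h.exists_interpolates X [ty A] Y rfl (by simp) (.ty A)
    refine ⟨box i F, .boxR (by simp) (.ty _) (.left [] [] (.box i A) hF.inner), ?_, ?_, ?_⟩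
    · simpa [bracket] using Derivable.left X Y (.box i F) hF.outer
    all_goals grind

theorem Interpolable.left (step : LeftStep Interpolable N M) (h : Interpolable (X ++ M ++ Y) C) :
    Interpolable (X ++ N ++ Y) C := by
  classical
  have step' : LeftStep Derivable N M := step.mono fun _ _ h => h.derivable
  refine ⟨.left X Y step' h.derivable, fun X' D Y' hW hne hD => ?_⟩
  obtain ⟨hN, hM⟩ := (step'.mono fun _ _ h => h.isBalanced).isBalanced
  rcases factor_cases hW with ⟨Z, rfl, rfl⟩ | ⟨Z, rfl, rfl⟩ | ⟨a, b, rfl, rfl, rfl⟩ |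
    ⟨d, g, n, rfl, rfl, hg, hn, rfl, rfl⟩ | ⟨n, g, d, rfl, rfl, hn, hg, rfl, rfl⟩ |
    ⟨m, n, rfl, hm, hn, rfl, rfl⟩
  · obtain ⟨E, hE⟩ := h.exists_interpolates (X ++ M ++ Z) D Y' (by simp) hne hD
    refine ⟨E, hE.inner, ?_, hE.labels_le_inner, ?_⟩
    · simpa using Derivable.left X (Z ++ [ty E] ++ Y') step' (by simpa using hE.outer)
    · grind
  · obtain ⟨E, hE⟩ := h.exists_interpolates X' D (Z ++ M ++ Y) (by simp) hne hD
    refine ⟨E, hE.inner, ?_, hE.labels_le_inner, ?_⟩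
    · simpa using Derivable.left (X' ++ [ty E] ++ Z) Y step' (by simpa using hE.outer)
    · grind
  · obtain ⟨E, hE⟩ := h.exists_interpolates X' (a ++ M ++ b) Y' (by simp)
      (by simp [step.ne_nil_right]) (hD.swap hN hM)
    refine ⟨E, .left a b step' hE.inner, hE.outer, ?_, hE.labels_le_outer⟩
    grind
  · exact Interpolates.of_prefix_overlap step h hD hN hg hn
  · exact Interpolates.of_suffix_overlap step (by simpa using h) hD hN hg hn
  · exact Interpolates.of_inner step h hD hne hm hn

theorem Interpolable.mulR {G D : Word α β} {A B : LTy α β} (hG : Interpolable G A)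
    (hD : Interpolable D B) : Interpolable (G ++ D) (mul A B) := by
  classical
  refine ⟨.mulR hG.derivable hD.derivable, fun X K Y hW hne hK => ?_⟩
  rcases factor_append_cases hW with ⟨n, rfl, rfl⟩ | ⟨m, rfl, rfl⟩ | ⟨d, g, rfl, hd, hg, rfl, rfl⟩
  · obtain ⟨E, hE⟩ := hG.exists_interpolates X K n rfl hne hK
    refine ⟨E, hE.inner, ?_, hE.labels_le_inner, by grind⟩
    simpa using Derivable.mulR hE.outer hD.derivable
  · obtain ⟨E, hE⟩ := hD.exists_interpolates m K Y rfl hne hK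
    refine ⟨E, hE.inner, ?_, hE.labels_le_inner, by grind⟩
    simpa using Derivable.mulR hG.derivable hE.outer
  · obtain ⟨-, hd', hg'⟩ := IsBalanced.overlap hG.derivable.isBalanced hK
    obtain ⟨E, hE⟩ := hG.exists_interpolates X d [] (by simp) hd hd'
    obtain ⟨F, hF⟩ := hD.exists_interpolates [] g Y rfl hg hg'
    refine ⟨mul E F, .mulR hE.inner hF.inner, .left X Y (.mul E F) ?_, by grind, by grind⟩
    simpa using Derivable.mulR hE.outer hF.outer

theorem Interpolable.diaR {i : β} {G : Word α β} {A : LTy α β} (hG : Interpolable G A) :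
    Interpolable (bracket i G) (dia i A) := by
  classical
  refine ⟨.diaR i hG.derivable, fun X K Y hW hne hK => ?_⟩
  rcases bracket_eq_append_balanced hG.derivable.isBalanced hK hne hW with
    ⟨rfl, rfl, rfl⟩ | ⟨a, b, rfl, rfl, rfl⟩
  · obtain ⟨E, hE⟩ := hG.exists_interpolates [] G [] (by simp) hG.derivable.ne_nil
      hG.derivable.isBalanced
    exact ⟨dia i E, .diaR i hE.inner, .left [] [] (.dia i E) (.diaR i hE.outer), by grind, by grind⟩
  · obtain ⟨E, hE⟩ := hG.exists_interpolates a K b rfl hne hK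
    refine ⟨E, hE.inner, ?_, hE.labels_le_inner, by grind⟩
    simpa [bracket] using Derivable.diaR i hE.outer

theorem Derivable.interpolable {W : Word α β} {C : LTy α β} (h : Derivable W C) :
    Interpolable W C := by
  classical
  induction h with
  | id p =>
    refine ⟨.id p, fun X D Y hW hne _ => ⟨prim p, ?_⟩⟩
    obtain ⟨rfl, rfl, rfl⟩ : X = [] ∧ D = [ty (prim p)] ∧ Y = [] := by
      simpa [append_eq_singleton_iff, singleton_eq_append_iff, hne] using hW
    exact ⟨.id p, .id p, by grind, by grind⟩
  | left X Y _ _ step ih => exact .left (step.mono fun _ _ h => h.2) ih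
  | @ldivR G A B ne h ih =>
    refine ⟨.ldivR ne h, fun X D Y hW hne hD => ?_⟩
    obtain ⟨E, hE⟩ := ih.exists_interpolates (ty A :: X) D Y (by simp [hW]) hne hD
    exact ⟨E, hE.inner, .ldivR (by simp) hE.outer, hE.labels_le_inner, by grind⟩
  | @rdivR G A B ne h ih =>
    refine ⟨.rdivR ne h, fun X D Y hW hne hD => ?_⟩
    obtain ⟨E, hE⟩ := ih.exists_interpolates X D (Y ++ [ty A]) (by simp [hW]) hne hD
    refine ⟨E, hE.inner, .rdivR (by simp) (by simpa using hE.outer), hE.labels_le_inner, by grind⟩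
  | mulR _ _ ihG ihD => exact ihG.mulR ihD
  | diaR i _ ih => exact ih.diaR
  | @boxR i G A ne hG h ih =>
    refine ⟨.boxR ne hG h, fun X D Y hW hne hD => ?_⟩
    subst hW
    obtain ⟨E, hE⟩ := ih.exists_interpolates (op i :: X) D (Y ++ [cl]) (by simp [bracket]) hne hD
    refine ⟨E, hE.inner, .boxR (by simp) (hG.swap hD (.ty E)) ?_, hE.labels_le_inner, by grind⟩
    simpa [bracket] using hE.outer

end Interpolation

section FreeGroupNorm

variable {γ : Type*} [DecidableEq γ]

/-- The length of the longest common prefix of two lists; for reduced words, the Gromov product of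
the corresponding vertices of the Cayley tree of a free group. -/
def commonPrefixLength : List γ → List γ → ℕ
  | a :: u, b :: v => if a = b then commonPrefixLength u v + 1 else 0
  | _, _ => 0

theorem min_commonPrefixLength_le (u v w : List γ) :
    min (commonPrefixLength u v) (commonPrefixLength v w) ≤ commonPrefixLength u w := by
  induction u generalizing v w with
  | nil => simp [commonPrefixLength]
  | cons a u ih =>
    rcases v with _ | ⟨b, v⟩ <;> rcases w with _ | ⟨c, w⟩ <;>
      simp only [commonPrefixLength, min_zero, le_refl, zero_le]
    grind

theorem isReduced_invRev_append {u v : List (γ × Bool)} (hu : FreeGroup.IsReduced u)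
    (hv : FreeGroup.IsReduced v) (huv : commonPrefixLength u v = 0) :
    FreeGroup.IsReduced (FreeGroup.invRev u ++ v) := by
  have hu' : FreeGroup.IsReduced (FreeGroup.invRev u) := by
    rw [FreeGroup.isReduced_iff_reduce_eq, FreeGroup.reduce_invRev, hu.reduce_eq]
  refine List.isChain_append.2 ⟨hu', hv, ?_⟩
  rcases u with _ | ⟨⟨a, c⟩, u⟩ <;> rcases v with _ | ⟨⟨b, d⟩, v⟩ <;>
    simp_all [FreeGroup.invRev, commonPrefixLength, Bool.eq_not]

theorem norm_inv_mk_mul_mk_add {u v : List (γ × Bool)} (hu : FreeGroup.IsReduced u)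
    (hv : FreeGroup.IsReduced v) :
    ((FreeGroup.mk u)⁻¹ * FreeGroup.mk v).norm + 2 * commonPrefixLength u v =
      u.length + v.length := by
  by_cases h : commonPrefixLength u v = 0
  · have := isReduced_invRev_append hu hv h
    simp [FreeGroup.inv_mk, FreeGroup.norm, this.reduce_eq, h]
  · obtain ⟨a, u, v, rfl, rfl⟩ : ∃ a u' v', u = a :: u' ∧ v = a :: v' := by
      rcases u with _ | ⟨a, u⟩ <;> rcases v with _ | ⟨b, v⟩ <;> simp_all [commonPrefixLength]
    have ih := norm_inv_mk_mul_mk_add hu.tail hv.tail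
    have : (FreeGroup.mk (a :: u))⁻¹ * FreeGroup.mk (a :: v) =
        (FreeGroup.mk u)⁻¹ * FreeGroup.mk v := by
      rw [← singleton_append, ← FreeGroup.mul_mk, ← singleton_append (l := v), ← FreeGroup.mul_mk]
      group
    simp only [this, commonPrefixLength, if_true, length_cons, tail_cons] at ih ⊢
    lia

/-- The four-point condition for the vertices `1`, `x`, `y`, `z` of the Cayley tree. -/
theorem norm_add_norm_inv_mul_le_max (x y z : FreeGroup γ) :
    y.norm + (x⁻¹ * z).norm ≤ max (x.norm + (y⁻¹ * z).norm) (z.norm + (x⁻¹ * y).norm) := by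
  have dist (u v : FreeGroup γ) :
      (u⁻¹ * v).norm + 2 * commonPrefixLength u.toWord v.toWord = u.norm + v.norm := by
    have := norm_inv_mk_mul_mk_add (u := u.toWord) (v := v.toWord) FreeGroup.isReduced_toWord
      FreeGroup.isReduced_toWord
    rwa [FreeGroup.mk_toWord, FreeGroup.mk_toWord] at this
  have := min_commonPrefixLength_le x.toWord y.toWord z.toWord
  have := dist x y
  have := dist y z
  have := dist x z
  lia

theorem norm_le_norm_mul_prod {l : List (FreeGroup γ)} {a u : FreeGroup γ}
    (hl : (u :: l).IsChain fun u v => max u.norm v.norm < (u * v).norm)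
    (ha : a.norm < (a * u).norm) : (a * u).norm ≤ (a * u * l.prod).norm := by
  induction l generalizing a u with
  | nil => simp
  | cons v l ih =>
    obtain ⟨huv, hl⟩ := isChain_cons_cons.1 hl
    have hauv : (a * u).norm < (a * u * v).norm := by
      have := norm_add_norm_inv_mul_le_max a (a * u) (a * u * v)
      simp only [mul_assoc, inv_mul_cancel_left, mul_inv_rev] at this ⊢
      lia
    rw [prod_cons, ← mul_assoc]
    exact hauv.le.trans (ih hl hauv)

/-- If every product of two neighbours were longer than both, the norms of the partial products
would increase strictly. -/
theorem exists_norm_mul_le_max {l : List (FreeGroup γ)} (hl : 2 ≤ l.length) (hprod : l.prod = 1) :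
    ∃ P Q u v, l = P ++ u :: v :: Q ∧ (u * v).norm ≤ max u.norm v.norm := by
  by_contra! hcon
  have hchain : l.IsChain fun u v => max u.norm v.norm < (u * v).norm := by
    rw [isChain_iff_forall_rel_of_append_cons_cons]
    exact fun u v P Q => hcon P Q u v
  rcases l with _ | ⟨u, _ | ⟨v, l⟩⟩
  · simp at hl
  · simp at hl
  · obtain ⟨huv, hl⟩ := isChain_cons_cons.1 hchain
    have hu := (le_max_left _ _).trans_lt huv
    have := norm_le_norm_mul_prod hl hu
    rw [prod_cons, prod_cons, ← mul_assoc] at hprod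
    simp only [hprod, FreeGroup.norm_one] at this
    lia

/-- Pentus's lemma: closing `l` up by the inverse of its product reduces it to the case of product
`1`. -/
theorem exists_infix_norm_prod_le {l : List (FreeGroup γ)} {m : ℕ} (hlen : 3 ≤ l.length)
    (hl : ∀ u ∈ l, u.norm ≤ m) (hprod : l.prod.norm ≤ m) :
    ∃ p d q, l = p ++ d ++ q ∧ 2 ≤ d.length ∧ d.length < l.length ∧ d.prod.norm ≤ m := by
  obtain ⟨P, Q, u, v, hPQ, huv⟩ := exists_norm_mul_le_max (l := l ++ [l.prod⁻¹])
    (by simp only [length_append, length_singleton]; lia) (by simp)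
  have hle : ∀ w ∈ l ++ [l.prod⁻¹], w.norm ≤ m := by simpa [or_imp, forall_and] using ⟨hl, hprod⟩
  have huv : (u * v).norm ≤ m := huv.trans (max_le (hle u (by simp [hPQ])) (hle v (by simp [hPQ])))
  rcases eq_nil_or_concat' Q with rfl | ⟨Q, w, rfl⟩
  · obtain ⟨hl, hv⟩ : l = P ++ [u] ∧ [l.prod⁻¹] = [v] := append_inj' (by simpa using hPQ) rfl
    have hlP := congrArg length hl
    rw [length_append, length_singleton] at hlP
    have hP : P.prod⁻¹ = u * v := by simp [← singleton_inj.1 hv, hl]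
    refine ⟨[], P, [u], by simp [hl], by lia, by lia, ?_⟩
    rwa [← FreeGroup.norm_inv_eq, hP]
  · obtain ⟨hl, -⟩ : l = P ++ [u, v] ++ Q ∧ [l.prod⁻¹] = [w] :=
      append_inj' (by simpa using hPQ) rfl
    exact ⟨P, [u, v], Q, hl, le_rfl, hlen, by simpa using huv⟩

end FreeGroupNorm

section GroupValue

/-- The word over the labels and their formal inverses that represents a type in the free group. -/
def LTy.signedLabels : LTy α β → List ((α ⊕ β) × Bool)
  | prim p => [(.inl p, true)]
  | ldiv A B => FreeGroup.invRev A.signedLabels ++ B.signedLabels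
  | rdiv B A => B.signedLabels ++ FreeGroup.invRev A.signedLabels
  | mul A B => A.signedLabels ++ B.signedLabels
  | dia i A => (.inr i, true) :: A.signedLabels
  | box i A => (.inr i, false) :: A.signedLabels

/-- The interpretation of a type in the free group over the labels. -/
def LTy.value (A : LTy α β) : FreeGroup (α ⊕ β) := FreeGroup.mk A.signedLabels

/-- The interpretation of a word in the free group over the labels; a closing bracket is trivial. -/
def value : Word α β → FreeGroup (α ⊕ β)
  | [] => 1
  | ty A :: w => A.value * value w
  | op i :: w => .of (.inr i) * value w
  | cl :: w => value w

@[simp] theorem LTy.value_ldiv (A B : LTy α β) : (ldiv A B).value = A.value⁻¹ * B.value := by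
  simp [value, signedLabels, FreeGroup.inv_mk]

@[simp] theorem LTy.value_rdiv (B A : LTy α β) : (rdiv B A).value = B.value * A.value⁻¹ := by
  simp [value, signedLabels, FreeGroup.inv_mk]

@[simp] theorem LTy.value_mul (A B : LTy α β) : (mul A B).value = A.value * B.value := by
  simp [value, signedLabels]

@[simp] theorem LTy.value_dia (i : β) (A : LTy α β) :
    (dia i A).value = .of (.inr i) * A.value := by
  simp [value, signedLabels, FreeGroup.of]

@[simp] theorem LTy.value_box (i : β) (A : LTy α β) :
    (box i A).value = (.of (.inr i))⁻¹ * A.value := by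
  simp [value, signedLabels, FreeGroup.of, FreeGroup.inv_mk, FreeGroup.invRev]

@[simp] theorem value_append (u v : Word α β) : value (u ++ v) = value u * value v := by
  induction u with
  | nil => simp [value]
  | cons t u ih => cases t <;> simp [value, ih, mul_assoc]

theorem LeftStep.value_eq {N M : Word α β}
    (step : LeftStep (fun G A => value G = A.value) N M) : value N = value M := by
  cases step with
  | ldiv B hG | rdiv B hG => simp [value, hG]
  | mul | dia | box => simp [value, bracket]

theorem Derivable.value_eq {W : Word α β} {C : LTy α β} (h : Derivable W C) :
    value W = C.value := by
  induction h with
  | id p => simp [value]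
  | left X Y _ _ step ih =>
    simp only [value_append, (step.mono fun _ _ h => h.2).value_eq] at ih ⊢
    exact ih
  | ldivR _ _ ih => simp [← ih, value]
  | rdivR _ _ ih => simp [← ih, value]
  | mulR _ _ ihG ihD => simp [ihG, ihD]
  | diaR i _ ih => simp [bracket, value, ih]
  | boxR _ _ _ ih => simp [← ih, bracket, value]

theorem LTy.map_fst_signedLabels (A : LTy α β) :
    (A.signedLabels.map Prod.fst : Multiset (α ⊕ β)) = A.labels := by
  induction A <;>
    simp_all [signedLabels, labels, FreeGroup.invRev, Function.comp_def, ← Multiset.coe_add,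
      ← Multiset.cons_coe]

variable [DecidableEq (α ⊕ β)]

theorem LTy.norm_value_le (A : LTy α β) : A.value.norm ≤ A.labels.card := by
  simpa [← map_fst_signedLabels, LTy.value] using FreeGroup.norm_mk_le (L₁ := A.signedLabels)

theorem LTy.norm_value_of_nodup {A : LTy α β} (h : A.labels.Nodup) :
    A.value.norm = A.labels.card := by
  rw [← map_fst_signedLabels] at h ⊢
  have hred : FreeGroup.IsReduced A.signedLabels :=
    (pairwise_map.1 (Multiset.coe_nodup.1 h)).isChain.imp fun _ _ hab h => absurd h hab
  simp [value, FreeGroup.norm, hred.reduce_eq]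

end GroupValue

section Relabelling

/-- Relabelling of a type. -/
def LTy.map {α' β' : Type*} (f : α' → α) (g : β' → β) : LTy α' β' → LTy α β
  | prim p => prim (f p)
  | ldiv A B => ldiv (A.map f g) (B.map f g)
  | rdiv B A => rdiv (B.map f g) (A.map f g)
  | mul A B => mul (A.map f g) (B.map f g)
  | dia i A => dia (g i) (A.map f g)
  | box i A => box (g i) (A.map f g)

/-- Relabelling of a letter. -/
def Token.map {α' β' : Type*} (f : α' → α) (g : β' → β) : Token α' β' → Token α β
  | ty A => ty (A.map f g)
  | op i => op (g i)
  | cl => cl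

/-- Relabelling of a word. -/
def relabel {α' β' : Type*} (f : α' → α) (g : β' → β) (w : Word α' β') : Word α β :=
  w.map (Token.map f g)

variable {α' β' α'' β'' : Type*} (f : α' → α) (g : β' → β)

@[simp] theorem relabel_nil : relabel f g [] = [] := rfl

@[simp] theorem relabel_append (u v : Word α' β') :
    relabel f g (u ++ v) = relabel f g u ++ relabel f g v :=
  map_append

@[simp] theorem relabel_ty_cons (A : LTy α' β') (w : Word α' β') :
    relabel f g (ty A :: w) = ty (A.map f g) :: relabel f g w := rfl

@[simp] theorem relabel_op_cons (i : β') (w : Word α' β') :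
    relabel f g (op i :: w) = op (g i) :: relabel f g w := rfl

@[simp] theorem relabel_cl_cons (w : Word α' β') : relabel f g (cl :: w) = cl :: relabel f g w :=
  rfl

@[simp] theorem relabel_bracket (i : β') (D : Word α' β') :
    relabel f g (bracket i D) = bracket (g i) (relabel f g D) := by
  simp [bracket]

theorem relabel_map_ty (l : List (LTy α' β')) :
    relabel f g (l.map ty) = (l.map (LTy.map f g)).map ty := by
  simp [relabel, Token.map]

@[simp] theorem relabel_eq_nil {w : Word α' β'} : relabel f g w = [] ↔ w = [] := map_eq_nil_iff

variable {f g}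

theorem relabel_eq_append {w : Word α' β'} {u v : Word α β} :
    relabel f g w = u ++ v ↔ ∃ u' v', w = u' ++ v' ∧ relabel f g u' = u ∧ relabel f g v' = v :=
  map_eq_append_iff

theorem relabel_eq_ty_cons {w : Word α' β'} {A : LTy α β} {v : Word α β} :
    relabel f g w = ty A :: v ↔
      ∃ A' v', w = ty A' :: v' ∧ A'.map f g = A ∧ relabel f g v' = v := by
  rcases w with _ | ⟨_ | _ | _, w⟩ <;> simp

theorem relabel_eq_op_cons {w : Word α' β'} {i : β} {v : Word α β} :
    relabel f g w = op i :: v ↔ ∃ i' v', w = op i' :: v' ∧ g i' = i ∧ relabel f g v' = v := by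
  rcases w with _ | ⟨_ | _ | _, w⟩ <;> simp

theorem relabel_eq_cl_cons {w : Word α' β'} {v : Word α β} :
    relabel f g w = cl :: v ↔ ∃ v', w = cl :: v' ∧ relabel f g v' = v := by
  rcases w with _ | ⟨_ | _ | _, w⟩ <;> simp

theorem relabel_eq_ty_singleton {w : Word α' β'} {A : LTy α β} :
    relabel f g w = [ty A] ↔ ∃ A', w = [ty A'] ∧ A'.map f g = A := by
  simp [relabel_eq_ty_cons]

theorem relabel_eq_bracket {w : Word α' β'} {i : β} {D : Word α β} :
    relabel f g w = bracket i D ↔ ∃ i' D', w = bracket i' D' ∧ g i' = i ∧ relabel f g D' = D := by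
  simp only [bracket, relabel_eq_op_cons, relabel_eq_append, relabel_eq_cl_cons, relabel_eq_nil]
  grind

theorem exists_eq_map_ty_of_relabel_eq {w : Word α' β'} {l : List (LTy α β)}
    (h : relabel f g w = l.map ty) :
    ∃ l' : List (LTy α' β'), w = l'.map ty ∧ l'.map (LTy.map f g) = l := by
  induction l generalizing w with
  | nil => exact ⟨[], by simpa using h, rfl⟩
  | cons A l ih =>
    obtain ⟨A', v, rfl, rfl, hv⟩ := relabel_eq_ty_cons.1 h
    obtain ⟨l', rfl, rfl⟩ := ih hv
    exact ⟨A' :: l', rfl, rfl⟩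

variable (f g)

@[simp] theorem LTy.map_map (f' : α'' → α') (g' : β'' → β') (A : LTy α'' β'') :
    (A.map f' g').map f g = A.map (f ∘ f') (g ∘ g') := by
  induction A <;> simp_all [LTy.map]

@[simp] theorem relabel_relabel (f' : α'' → α') (g' : β'' → β') (w : Word α'' β'') :
    relabel f g (relabel f' g' w) = relabel (f ∘ f') (g ∘ g') w := by
  induction w with
  | nil => rfl
  | cons t w ih => cases t <;> simp [ih]

@[simp] theorem LTy.labels_map (A : LTy α' β') :
    (A.map f g).labels = A.labels.map (Sum.map f g) := by
  induction A <;> simp_all [LTy.map, labels]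

@[simp] theorem labels_relabel (w : Word α' β') :
    labels (relabel f g w) = (labels w).map (Sum.map f g) := by
  induction w with
  | nil => rfl
  | cons t w ih => cases t <;> simp [labels, ih]

@[simp] theorem isBalanced_relabel {w : Word α' β'} :
    IsBalanced (relabel f g w) ↔ IsBalanced w := by
  have : height (relabel f g w) = height w ∧ minHeight (relabel f g w) = minHeight w := by
    induction w with
    | nil => simp [height, minHeight]
    | cons t w ih => cases t <;> simp [height, minHeight, ih]
  simp [IsBalanced, this]

protected theorem LeftStep.relabel {Q : Word α' β' → LTy α' β' → Prop}
    {R : Word α β → LTy α β → Prop} (hQR : ∀ G A, Q G A → R (relabel f g G) (A.map f g))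
    {N M : Word α' β'} (step : LeftStep Q N M) : LeftStep R (relabel f g N) (relabel f g M) := by
  cases step with
  | ldiv B hG => simpa [LTy.map] using LeftStep.ldiv (B.map f g) (hQR _ _ hG)
  | rdiv B hG => simpa [LTy.map] using LeftStep.rdiv (B.map f g) (hQR _ _ hG)
  | mul A B => exact .mul _ _
  | dia i A => simpa [LTy.map] using LeftStep.dia (g i) (A.map f g)
  | box i A => simpa [LTy.map] using LeftStep.box (g i) (A.map f g)

protected theorem Derivable.relabel {W : Word α' β'} {C : LTy α' β'} (h : Derivable W C) :
    Derivable (relabel f g W) (C.map f g) := by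
  induction h with
  | id p => exact .id _
  | left X Y _ _ step ih =>
    simp only [relabel_append] at ih ⊢
    exact .left _ _ (step.relabel f g fun _ _ h => h.2) ih
  | ldivR ne _ ih => exact .ldivR (by simpa using ne) ih
  | rdivR ne _ ih => exact .rdivR (by simpa using ne) (by simpa using ih)
  | mulR _ _ ihG ihD => simpa [LTy.map] using Derivable.mulR ihG ihD
  | diaR i _ ih => simpa [LTy.map] using Derivable.diaR _ ih
  | boxR ne hG _ ih =>
    exact .boxR (by simpa using ne) (by simpa using hG) (by simpa using ih)

end Relabelling

section Thinning

open Sum (inl inr)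

/-- Every element of the multiset occurs at most twice. -/
def IsThin {γ : Type*} (s : Multiset γ) : Prop := ∃ t : Multiset γ, t.Nodup ∧ s ≤ t + t

theorem IsThin.nodup {γ : Type*} {s t u : Multiset γ} (h : IsThin (t + u)) (ht : s ≤ t)
    (hu : s ≤ u) : s.Nodup := by
  classical
  obtain ⟨v, hv, hle⟩ := h
  refine Multiset.nodup_of_le (Multiset.le_iff_count.2 fun x => ?_) hv
  have := Multiset.le_iff_count.1 ((add_le_add ht hu).trans hle) x
  simp only [Multiset.count_add] at this
  lia

theorem IsThin.zero {γ : Type*} : IsThin (0 : Multiset γ) := ⟨0, by simp⟩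

theorem IsThin.add_self {γ : Type*} (x : γ) : IsThin ({x} + {x}) := ⟨{x}, by simp⟩

variable {α₁ β₁ α₂ β₂ : Type*}

theorem IsThin.sum {s : Multiset (α₁ ⊕ β₁)} {t : Multiset (α₂ ⊕ β₂)} (hs : IsThin s)
    (ht : IsThin t) :
    IsThin (s.map (Sum.map (inl : _ → α₁ ⊕ α₂) (inl : _ → β₁ ⊕ β₂)) +
      t.map (Sum.map inr inr)) := by
  obtain ⟨s', hs', hs⟩ := hs
  obtain ⟨t', ht', ht⟩ := ht
  refine ⟨s'.map (Sum.map inl inl) + t'.map (Sum.map inr inr), ?_, ?_⟩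
  · refine (hs'.map (Sum.inl_injective.sumMap Sum.inl_injective)).add_iff
      (ht'.map (Sum.inr_injective.sumMap Sum.inr_injective)) |>.2 ?_
    simp [Multiset.disjoint_left]
  · calc
      _ ≤ (s' + s').map (Sum.map inl inl) + (t' + t').map (Sum.map inr inr) :=
        add_le_add (Multiset.map_le_map hs) (Multiset.map_le_map ht)
      _ = _ := by rw [Multiset.map_add, Multiset.map_add, add_add_add_comm]

/-- The sequent `W ⇒ C` is a relabelling of a derivable sequent in which every label occurs at most
twice. -/
def HasThinPreimage (W : Word α β) (C : LTy α β) : Prop :=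
  ∃ (α' β' : Type) (f : α' → α) (g : β' → β) (W' : Word α' β') (C' : LTy α' β'),
    relabel f g W' = W ∧ C'.map f g = C ∧ Derivable W' C' ∧ IsThin (labels W' + C'.labels)

/-- A left rule lifts to preimages; labels that occur in its conclusion but not in its premise are
fresh, and so are those of a preimage of its minor premise. -/
theorem LeftStep.exists_preimage {α' β' : Type} {f : α' → α} {g : β' → β} {N : Word α β}
    {M' : Word α' β'} (step : LeftStep HasThinPreimage N (relabel f g M')) :
    ∃ (α₂ β₂ : Type) (f₂ : α₂ → α) (g₂ : β₂ → β) (N' : Word (α' ⊕ α₂) (β' ⊕ β₂))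
      (T : Multiset (α₂ ⊕ β₂)), LeftStep Derivable N' (relabel inl inl M') ∧
      relabel (Sum.elim f f₂) (Sum.elim g g₂) N' = N ∧
      labels N' = (labels M').map (Sum.map inl inl) + T.map (Sum.map inr inr) ∧ IsThin T := by
  generalize hM : relabel f g M' = M at step
  cases step with
  | ldiv B hG =>
    obtain ⟨α₂, β₂, f₂, g₂, G, A, rfl, rfl, h, hthin⟩ := hG
    obtain ⟨B, rfl, rfl⟩ := relabel_eq_ty_singleton.1 hM
    refine ⟨α₂, β₂, f₂, g₂, _, _, .ldiv (B.map inl inl) (h.relabel inr inr), ?_, ?_, hthin⟩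
    · simp [LTy.map]
    · simp [labels, LTy.labels, add_comm, add_left_comm]
  | rdiv B hG =>
    obtain ⟨α₂, β₂, f₂, g₂, G, A, rfl, rfl, h, hthin⟩ := hG
    obtain ⟨B, rfl, rfl⟩ := relabel_eq_ty_singleton.1 hM
    refine ⟨α₂, β₂, f₂, g₂, _, _, .rdiv (B.map inl inl) (h.relabel inr inr), ?_, ?_, hthin⟩
    · simp [LTy.map]
    · simp [labels, LTy.labels, add_comm, add_left_comm]
  | mul A B =>
    obtain ⟨A, _, rfl, rfl, hB⟩ := relabel_eq_ty_cons.1 hM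
    obtain ⟨B, rfl, rfl⟩ := relabel_eq_ty_singleton.1 hB
    exact ⟨Empty, Empty, nofun, nofun, _, 0, .mul (A.map inl inl) (B.map inl inl),
      by simp [LTy.map], by simp [labels, LTy.labels], .zero⟩
  | dia i A =>
    obtain ⟨i, _, rfl, rfl, hA⟩ := relabel_eq_bracket.1 hM
    obtain ⟨A, rfl, rfl⟩ := relabel_eq_ty_singleton.1 hA
    refine ⟨Empty, Empty, nofun, nofun, [ty (LTy.dia (inl i) (A.map inl inl))], 0, ?_,
      by simp [LTy.map], by simp [labels, LTy.labels], .zero⟩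
    simpa using LeftStep.dia (inl i) (A.map inl inl)
  | box i A =>
    obtain ⟨A, rfl, rfl⟩ := relabel_eq_ty_singleton.1 hM
    exact ⟨Empty, Unit, nofun, fun _ => i, _, {inr ()} + {inr ()},
      .box (inr ()) (A.map inl inl), by simp [LTy.map],
      by simp [labels, LTy.labels, add_comm], .add_self _⟩

theorem HasThinPreimage.left {X Y N M : Word α β} {C : LTy α β}
    (step : LeftStep HasThinPreimage N M) (h : HasThinPreimage (X ++ M ++ Y) C) :
    HasThinPreimage (X ++ N ++ Y) C := by
  obtain ⟨α', β', f, g, W, C, hW, rfl, h, hthin⟩ := h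
  obtain ⟨_, Y, rfl, hXM, rfl⟩ := relabel_eq_append.1 hW
  obtain ⟨X, M, rfl, rfl, rfl⟩ := relabel_eq_append.1 hXM
  obtain ⟨α₂, β₂, f₂, g₂, N, T, step', rfl, hN, hT⟩ := step.exists_preimage
  refine ⟨_, _, Sum.elim f f₂, Sum.elim g g₂, relabel inl inl X ++ N ++ relabel inl inl Y,
    C.map inl inl, by simp, by simp, .left _ _ step' ?_, ?_⟩
  · simpa using h.relabel inl inl
  · convert hthin.sum hT using 1
    simp [hN, add_assoc, add_comm, add_left_comm]

theorem HasThinPreimage.mulR {G D : Word α β} {A B : LTy α β} (hG : HasThinPreimage G A)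
    (hD : HasThinPreimage D B) : HasThinPreimage (G ++ D) (mul A B) := by
  obtain ⟨α₁, β₁, f₁, g₁, G, A, rfl, rfl, hG, hthin₁⟩ := hG
  obtain ⟨α₂, β₂, f₂, g₂, D, B, rfl, rfl, hD, hthin₂⟩ := hD
  refine ⟨_, _, Sum.elim f₁ f₂, Sum.elim g₁ g₂, _, _, by simp, by simp [LTy.map],
    .mulR (hG.relabel inl inl) (hD.relabel inr inr), ?_⟩
  convert hthin₁.sum hthin₂ using 1
  simp [LTy.labels, add_assoc, add_left_comm]

theorem HasThinPreimage.diaR (i : β) {G : Word α β} {A : LTy α β} (h : HasThinPreimage G A) :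
    HasThinPreimage (bracket i G) (dia i A) := by
  obtain ⟨α', β', f, g, G, A, rfl, rfl, h, hthin⟩ := h
  refine ⟨_, _, Sum.elim f (Empty.elim : Empty → α), Sum.elim g fun _ : Unit => i,
    bracket (inr ()) (relabel inl inl G), _, by simp, by simp [LTy.map],
    Derivable.diaR (inr ()) (h.relabel inl inl), ?_⟩
  convert hthin.sum (IsThin.add_self (inr ())) using 1
  simp [LTy.labels, add_comm]

theorem Derivable.hasThinPreimage {W : Word α β} {C : LTy α β} (h : Derivable W C) :
    HasThinPreimage W C := by
  induction h with
  | id p =>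
    exact ⟨Unit, Empty, fun _ => p, nofun, _, _, by simp [LTy.map], by simp [LTy.map], .id (),
      by simpa [labels, LTy.labels] using IsThin.add_self _⟩
  | left X Y _ _ step ih => exact .left (step.mono fun _ _ h => h.2) ih
  | ldivR ne _ ih =>
    obtain ⟨α', β', f, g, W, B, hW, rfl, h, hthin⟩ := ih
    obtain ⟨A, G, rfl, rfl, rfl⟩ := relabel_eq_ty_cons.1 hW
    refine ⟨α', β', f, g, G, _, rfl, by simp [LTy.map], .ldivR (by simpa using ne) h, ?_⟩
    simpa [labels, LTy.labels, add_assoc, add_comm, add_left_comm] using hthin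
  | rdivR ne _ ih =>
    obtain ⟨α', β', f, g, W, B, hW, rfl, h, hthin⟩ := ih
    obtain ⟨G, _, rfl, rfl, hA⟩ := relabel_eq_append.1 hW
    obtain ⟨A, rfl, rfl⟩ := relabel_eq_ty_singleton.1 hA
    refine ⟨α', β', f, g, G, _, rfl, by simp [LTy.map], .rdivR (by simpa using ne) h, ?_⟩
    simpa [labels, LTy.labels, add_assoc, add_comm, add_left_comm] using hthin
  | mulR _ _ ihG ihD => exact ihG.mulR ihD
  | diaR i _ ih => exact ih.diaR i
  | boxR ne hG _ ih =>
    obtain ⟨α', β', f, g, W, A, hW, rfl, h, hthin⟩ := ih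
    obtain ⟨i, G, rfl, rfl, rfl⟩ := relabel_eq_bracket.1 hW
    refine ⟨α', β', f, g, G, _, rfl, by simp [LTy.map],
      .boxR (by simpa using ne) (by simpa using hG) h, ?_⟩
    simpa [LTy.labels, add_assoc, add_comm, add_left_comm] using hthin

end Thinning

section Reduction

/-- The types that have at most `m` label occurrences, all of them from `B`. -/
def smallTypes (m : ℕ) (B : Set (α ⊕ β)) : Set (LTy α β) :=
  {A | A.labels.card ≤ m ∧ ∀ x ∈ A.labels, x ∈ B}

theorem subtypeClosed_smallTypes (m : ℕ) (B : Set (α ⊕ β)) : SubtypeClosed (smallTypes m B) := by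
  constructor <;>
    simp only [smallTypes, LTy.labels, Multiset.card_add, Multiset.mem_add, Set.mem_ofPred_eq] <;>
    grind

theorem LTy.labels_ne_zero (A : LTy α β) : A.labels ≠ 0 := by
  induction A <;> simp_all [labels]

theorem LTy.map_mem_smallTypes {α' β' : Type*} {f : α' → α} {g : β' → β} {m : ℕ}
    {B : Set (α ⊕ β)} {A : LTy α' β'} :
    A.map f g ∈ smallTypes m B ↔ A ∈ smallTypes m (Sum.map f g ⁻¹' B) := by
  simp [smallTypes]

theorem mem_prod_smallTypes_of_labels_add {m : ℕ} {B : Set (α ⊕ β)} {A A' : LTy α β}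
    (h : (A.labels + A'.labels).card ≤ m + 1) (hB : ∀ x ∈ A.labels + A'.labels, x ∈ B) :
    (A, A') ∈ smallTypes m B ×ˢ smallTypes m B := by
  have := Multiset.card_pos.2 A.labels_ne_zero
  have := Multiset.card_pos.2 A'.labels_ne_zero
  simp only [Multiset.card_add, Multiset.mem_add, or_imp, forall_and] at h hB
  exact ⟨⟨by lia, hB.1⟩, ⟨by lia, hB.2⟩⟩

theorem mem_prod_smallTypes_of_labels_cons {m : ℕ} {B : Set (α ⊕ β)} {i : β} {A : LTy α β}
    (h : (Sum.inr i ::ₘ A.labels).card ≤ m + 1) (hB : ∀ x ∈ Sum.inr i ::ₘ A.labels, x ∈ B) :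
    (i, A) ∈ (Sum.inr ⁻¹' B) ×ˢ smallTypes m B := by
  simp only [Multiset.card_cons, Multiset.mem_cons, forall_eq_or_imp] at h hB
  exact ⟨hB.1, by lia, hB.2⟩

theorem finite_smallTypes (m : ℕ) {B : Set (α ⊕ β)} (hB : B.Finite) : (smallTypes m B).Finite := by
  induction m with
  | zero =>
    refine Set.finite_empty.subset fun A hA => A.labels_ne_zero ?_
    simpa using hA.1
  | succ m ih =>
    have hα : (Sum.inl ⁻¹' B).Finite := hB.preimage Sum.inl_injective.injOn
    have hβ : (Sum.inr ⁻¹' B).Finite := hB.preimage Sum.inr_injective.injOn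
    refine ((hα.image prim).union <| ((ih.prod ih).image fun x => ldiv x.1 x.2).union <|
      ((ih.prod ih).image fun x => rdiv x.1 x.2).union <|
      ((ih.prod ih).image fun x => mul x.1 x.2).union <|
      ((hβ.prod ih).image fun x => dia x.1 x.2).union
        ((hβ.prod ih).image fun x => box x.1 x.2)).subset ?_
    rintro A ⟨hcard, hA⟩
    cases A with
    | prim p => exact .inl ⟨p, hA _ (by simp [LTy.labels]), rfl⟩
    | ldiv A A' => exact .inr (.inl ⟨_, mem_prod_smallTypes_of_labels_add hcard hA, rfl⟩)
    | rdiv A A' => exact .inr (.inr (.inl ⟨_, mem_prod_smallTypes_of_labels_add hcard hA, rfl⟩))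
    | mul A A' =>
      exact .inr (.inr (.inr (.inl ⟨_, mem_prod_smallTypes_of_labels_add hcard hA, rfl⟩)))
    | dia i A =>
      exact .inr (.inr (.inr (.inr (.inl ⟨_, mem_prod_smallTypes_of_labels_cons hcard hA, rfl⟩))))
    | box i A =>
      exact .inr (.inr (.inr (.inr (.inr ⟨_, mem_prod_smallTypes_of_labels_cons hcard hA, rfl⟩))))

/-- Some factor of length at least two of the antecedent of `l ⇒ C`, but not the whole antecedent,
can be replaced by a single type from `S`. -/
def Reducible (S : Set (LTy α β)) (l : List (LTy α β)) (C : LTy α β) : Prop :=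
  ∃ p d q, ∃ E ∈ S, l = p ++ d ++ q ∧ 2 ≤ d.length ∧ d.length < l.length ∧
    Derivable (d.map ty) E ∧ Derivable ((p ++ E :: q).map ty) C

theorem isBalanced_map_ty (l : List (LTy α β)) : IsBalanced (l.map ty) := by
  induction l with
  | nil => exact .nil
  | cons A l ih => exact .append (.ty A) ih

theorem value_map_ty (l : List (LTy α β)) : value (l.map ty) = (l.map LTy.value).prod := by
  induction l <;> simp_all [value]

theorem mem_labels_map_ty {l : List (LTy α β)} {x : α ⊕ β} :
    x ∈ labels (l.map ty) ↔ ∃ A ∈ l, x ∈ A.labels := by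
  induction l <;> simp_all [labels]

theorem Derivable.reducible_of_isThin {m : ℕ} {B : Set (α ⊕ β)} {l : List (LTy α β)} {C : LTy α β}
    (h : Derivable (l.map ty) C) (hthin : IsThin (labels (l.map ty) + C.labels))
    (hlen : 3 ≤ l.length) (hl : ∀ A ∈ l, A ∈ smallTypes m B) (hC : C ∈ smallTypes m B) :
    Reducible (smallTypes m B) l C := by
  classical
  have hprod : (l.map LTy.value).prod = C.value := by rw [← value_map_ty, h.value_eq]
  obtain ⟨p, d, q, hl', hd, hdl, hnorm⟩ := exists_infix_norm_prod_le (l := l.map LTy.value)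
    (by simpa using hlen)
    (forall_mem_map.2 fun A hA => A.norm_value_le.trans (hl A hA).1)
    (hprod ▸ C.norm_value_le.trans hC.1)
  obtain ⟨_, q, rfl, hpd, rfl⟩ := map_eq_append_iff.1 hl'
  obtain ⟨p, d, rfl, rfl, rfl⟩ := map_eq_append_iff.1 hpd
  obtain ⟨E, hE⟩ := h.interpolable.exists_interpolates (p.map ty) (d.map ty) (q.map ty) (by simp)
    (by rintro h; simp_all) (isBalanced_map_ty d)
  have hnodup : E.labels.Nodup := by
    refine IsThin.nodup ?_ hE.labels_le_inner hE.labels_le_outer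
    simpa [add_assoc, add_left_comm] using hthin
  refine ⟨p, d, q, E, ⟨?_, fun x hx => ?_⟩, rfl, by simpa using hd, by simpa using hdl,
    hE.inner, by simpa using hE.outer⟩
  · rwa [← LTy.norm_value_of_nodup hnodup, ← hE.inner.value_eq, value_map_ty]
  · obtain ⟨A, hA, hx⟩ : ∃ A ∈ d, x ∈ A.labels :=
      mem_labels_map_ty.1 <| Multiset.mem_of_le hE.labels_le_inner hx
    exact (hl A (by simp [hA])).2 x hx

theorem Derivable.reducible {m : ℕ} {B : Set (α ⊕ β)} {l : List (LTy α β)} {C : LTy α β}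
    (h : Derivable (l.map ty) C) (hlen : 3 ≤ l.length) (hl : ∀ A ∈ l, A ∈ smallTypes m B)
    (hC : C ∈ smallTypes m B) : Reducible (smallTypes m B) l C := by
  obtain ⟨α', β', f, g, W, C, hW, rfl, h', hthin⟩ := h.hasThinPreimage
  obtain ⟨l, rfl, rfl⟩ := exists_eq_map_ty_of_relabel_eq hW
  obtain ⟨p, d, q, E, hE, rfl, hd, hdl, hdE, hC⟩ := h'.reducible_of_isThin hthin (m := m)
    (B := Sum.map f g ⁻¹' B) (by simpa using hlen)
    (fun A hA => LTy.map_mem_smallTypes.1 (hl _ (mem_map_of_mem hA))) (LTy.map_mem_smallTypes.1 hC)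
  refine ⟨p.map (.map f g), d.map (.map f g), q.map (.map f g), E.map f g,
    LTy.map_mem_smallTypes.2 hE, by simp, by simpa using hd, by simpa using hdl, ?_, ?_⟩
  · simpa [relabel_map_ty] using hdE.relabel f g
  · simpa [relabel_map_ty] using hC.relabel f g

end Reduction

section CutAdmissibility

/-- Every sequent that is derivable with each member of `S` as a factor of the antecedent is
derivable with `w` in that place. -/
def Covered (w : Word α β) (S : Set (Word α β)) : Prop :=
  ∀ X Y E, (∀ s ∈ S, Derivable (X ++ s ++ Y) E) → Derivable (X ++ w ++ Y) E

/-- Nonempty balanced words, the only possible antecedents of derivable sequents. -/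
def IsProper (w : Word α β) : Prop := w ≠ [] ∧ IsBalanced w

/-- The phase semantics of types. It is used to prove the admissibility of the cut rule: a word
belongs to the value of `A` if and only if it derives `A`. -/
def LTy.phase : LTy α β → Language (Token α β)
  | prim p => {w | Derivable w (prim p)}
  | ldiv A B => {w | IsProper w ∧ ∀ u ∈ A.phase, u ++ w ∈ B.phase}
  | rdiv B A => {w | IsProper w ∧ ∀ u ∈ A.phase, w ++ u ∈ B.phase}
  | mul A B => {w | IsProper w ∧ Covered w (A.phase * B.phase)}
  | dia i A => {w | IsProper w ∧ Covered w (bracket i '' A.phase)}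
  | box i A => {w | IsProper w ∧ bracket i w ∈ A.phase}

/-- The value of a word: all results of replacing each type in it by a member of its value. -/
def phase : Word α β → Language (Token α β)
  | [] => 1
  | ty A :: w => A.phase * phase w
  | op i :: w => {[op i]} * phase w
  | cl :: w => {[cl]} * phase w

theorem Covered.of_mem {w : Word α β} {S : Set (Word α β)} (h : w ∈ S) : Covered w S :=
  fun _ _ _ hS => hS w h

theorem LeftStep.covered {N M : Word α β} (step : LeftStep Derivable N M) : Covered N {M} :=
  fun X Y _ h => .left X Y step (h M rfl)

theorem Covered.context {w : Word α β} {S : Set (Word α β)} (h : Covered w S) (x y : Word α β) :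
    Covered (x ++ w ++ y) ((fun s => x ++ s ++ y) '' S) := by
  intro X Y E hS
  simpa using h (X ++ x) (y ++ Y) E fun s hs => by simpa using hS _ ⟨s, hs, rfl⟩

theorem Covered.trans {w : Word α β} {S T : Set (Word α β)} (h : Covered w S)
    (hS : ∀ s ∈ S, Covered s T) : Covered w T :=
  fun X Y E hT => h X Y E fun s hs => hS s hs X Y E hT

theorem IsProper.ty (A : LTy α β) : IsProper [ty A] := ⟨by simp, .ty A⟩

theorem IsProper.bracket (i : β) {w : Word α β} (h : IsBalanced w) : IsProper (bracket i w) :=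
  ⟨by simp [LDiamond.bracket], h.bracket i⟩

theorem IsProper.append {u v : Word α β} (hu : IsProper u) (hv : IsBalanced v) :
    IsProper (u ++ v) :=
  ⟨by simp [hu.1], hu.2.append hv⟩

theorem LTy.isProper_of_mem_phase {A : LTy α β} {w : Word α β} (h : w ∈ A.phase) :
    IsProper w := by
  cases A with
  | prim p => exact ⟨Derivable.ne_nil h, Derivable.isBalanced h⟩
  | _ => exact h.1

theorem LTy.mem_phase_of_covered {C : LTy α β} {S : Set (Word α β)} {w x y : Word α β}
    (hwxy : IsProper (x ++ w ++ y)) (hw : Covered w S) (hS : ∀ s ∈ S, x ++ s ++ y ∈ C.phase) :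
    x ++ w ++ y ∈ C.phase := by
  induction C generalizing x y with
  | prim p => exact hw x y _ hS
  | ldiv A B _ ih =>
    refine ⟨hwxy, fun u hu => ?_⟩
    have hu' := isProper_of_mem_phase hu
    simpa using ih (x := u ++ x) (y := y) (by simpa using hu'.append hwxy.2)
      fun s hs => by simpa using (hS s hs).2 u hu
  | rdiv B A ih _ =>
    refine ⟨hwxy, fun u hu => ?_⟩
    have hu' := isProper_of_mem_phase hu
    simpa using ih (x := x) (y := y ++ u) (by simpa using hwxy.append hu'.2)
      fun s hs => by simpa using (hS s hs).2 u hu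
  | mul A B _ _ | dia i A _ =>
    exact ⟨hwxy, (hw.context x y).trans (Set.forall_mem_image.2 fun s hs => (hS s hs).2)⟩
  | box i A ih =>
    refine ⟨hwxy, ?_⟩
    simpa [bracket] using ih (x := op i :: x) (y := y ++ [cl])
      (by simpa [bracket] using IsProper.bracket i hwxy.2)
      fun s hs => by simpa [bracket] using (hS s hs).2

theorem LTy.mem_phase_of_leftStep {B : LTy α β} {N M : Word α β} (step : LeftStep Derivable N M)
    (hM : M ∈ B.phase) : N ∈ B.phase := by
  have hN := (step.mono fun _ _ h => h.isBalanced).isBalanced.1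
  simpa using mem_phase_of_covered (x := []) (y := []) (by simpa using ⟨step.ne_nil_left, hN⟩)
    step.covered (by simpa using hM)

theorem LTy.ty_mem_phase_and_derivable (A : LTy α β) :
    [ty A] ∈ A.phase ∧ ∀ w ∈ A.phase, Derivable w A := by
  induction A with
  | prim p => exact ⟨.id p, fun w h => h⟩
  | ldiv A B ihA ihB =>
    exact ⟨⟨.ty _, fun u hu => mem_phase_of_leftStep (.ldiv B (ihA.2 u hu)) ihB.1⟩,
      fun w h => .ldivR h.1.1 (ihB.2 _ (h.2 _ ihA.1))⟩
  | rdiv B A ihB ihA =>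
    exact ⟨⟨.ty _, fun u hu => mem_phase_of_leftStep (.rdiv B (ihA.2 u hu)) ihB.1⟩,
      fun w h => .rdivR h.1.1 (ihB.2 _ (h.2 _ ihA.1))⟩
  | mul A B ihA ihB =>
    refine ⟨⟨.ty _, (LeftStep.mul A B).covered.trans ?_⟩, fun w h => ?_⟩
    · rintro _ rfl
      exact .of_mem (Language.append_mem_mul ihA.1 ihB.1)
    · have := h.2 [] [] (mul A B) fun s hs => by
        obtain ⟨u, hu, v, hv, rfl⟩ := Language.mem_mul.1 hs
        simpa using Derivable.mulR (ihA.2 u hu) (ihB.2 v hv)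
      simpa using this
  | dia i A ih =>
    refine ⟨⟨.ty _, (LeftStep.dia i A).covered.trans ?_⟩, fun w h => ?_⟩
    · rintro _ rfl
      exact .of_mem ⟨_, ih.1, rfl⟩
    · simpa using h.2 [] [] (dia i A) (Set.forall_mem_image.2 fun u hu => by
        simpa using Derivable.diaR i (ih.2 u hu))
  | box i A ih =>
    exact ⟨⟨.ty _, mem_phase_of_leftStep (.box i A) ih.1⟩,
      fun w h => .boxR h.1.1 h.1.2 (ih.2 _ h.2)⟩

@[simp] theorem phase_append (u v : Word α β) : phase (u ++ v) = phase u * phase v := by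
  induction u with
  | nil => simp [phase]
  | cons t u ih => cases t <;> simp [phase, ih, mul_assoc]

@[simp] theorem phase_ty (A : LTy α β) : phase [ty A] = A.phase := by simp [phase]

theorem mem_phase_append {u v w : Word α β} :
    w ∈ phase (u ++ v) ↔ ∃ a ∈ phase u, ∃ b ∈ phase v, a ++ b = w := by
  rw [phase_append, Language.mem_mul]

theorem mem_phase_bracket {i : β} {D w : Word α β} :
    w ∈ phase (bracket i D) ↔ ∃ u ∈ phase D, bracket i u = w := by
  have hop : phase [op i] = ({[op i]} : Language (Token α β)) := by simp [phase]
  have hcl : phase [cl] = ({[cl]} : Language (Token α β)) := by simp [phase]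
  rw [bracket, ← singleton_append, phase_append, phase_append, hop, hcl]
  constructor
  · rintro ⟨_, rfl, _, ⟨u, hu, _, rfl, rfl⟩, rfl⟩
    exact ⟨u, hu, rfl⟩
  · rintro ⟨u, hu, rfl⟩
    exact ⟨_, rfl, _, ⟨u, hu, _, rfl, rfl⟩, rfl⟩

theorem mem_phase_self (W : Word α β) : W ∈ phase W := by
  induction W with
  | nil => rfl
  | cons t W ih =>
    cases t with
    | ty A => exact Language.append_mem_mul A.ty_mem_phase_and_derivable.1 ih
    | op i => exact Language.append_mem_mul (a := [op i]) rfl ih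
    | cl => exact Language.append_mem_mul (a := [cl]) rfl ih

theorem height_and_minHeight_of_mem_phase {W w : Word α β} (h : w ∈ phase W) :
    height w = height W ∧ minHeight w = minHeight W := by
  induction W generalizing w with
  | nil => obtain rfl : w = [] := h; simp
  | cons t W ih =>
    cases t <;> obtain ⟨u, hu, v, hv, rfl⟩ := h <;> obtain ⟨ih₁, ih₂⟩ := ih hv
    case ty A =>
      obtain ⟨h₁, h₂⟩ := (LTy.isProper_of_mem_phase hu).2
      simp [height, minHeight, *]
    all_goals
      obtain rfl := hu
      simp [height, minHeight, *]

theorem ne_nil_of_mem_phase {W w : Word α β} (hW : W ≠ []) (h : w ∈ phase W) : w ≠ [] := by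
  rcases W with _ | ⟨_ | _ | _, W⟩
  · contradiction
  all_goals obtain ⟨u, hu, v, -, rfl⟩ := h
  · simp [(LTy.isProper_of_mem_phase hu).1]
  all_goals obtain rfl := hu; simp

theorem IsProper.of_mem_phase {W w : Word α β} (hW : IsProper W) (h : w ∈ phase W) :
    IsProper w := by
  have := height_and_minHeight_of_mem_phase h
  exact ⟨ne_nil_of_mem_phase hW.1 h, by rw [IsBalanced, this.1, this.2]; exact hW.2⟩

theorem Derivable.isProper {W : Word α β} {C : LTy α β} (h : Derivable W C) : IsProper W :=
  ⟨h.ne_nil, h.isBalanced⟩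

theorem LeftStep.covered_phase {N M n : Word α β}
    (step : LeftStep (fun G A => phase G ≤ A.phase) N M) (hn : n ∈ phase N) :
    Covered n (phase M) := by
  cases step with
  | ldiv B hG =>
    obtain ⟨g, hg, l, hl, rfl⟩ := mem_phase_append.1 hn
    rw [phase_ty] at hl ⊢
    exact .of_mem (hl.2 g (hG hg))
  | rdiv B hG =>
    rw [← singleton_append] at hn
    obtain ⟨l, hl, g, hg, rfl⟩ := mem_phase_append.1 hn
    rw [phase_ty] at hl ⊢
    exact .of_mem (hl.2 g (hG hg))
  | mul A B =>
    rw [phase_ty] at hn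
    rw [← singleton_append, phase_append, phase_ty, phase_ty]
    exact hn.2
  | dia i A =>
    rw [phase_ty] at hn
    exact hn.2.trans (Set.forall_mem_image.2 fun u hu =>
      .of_mem (mem_phase_bracket.2 ⟨u, by rwa [phase_ty], rfl⟩))
  | box i A =>
    obtain ⟨l, hl, rfl⟩ := mem_phase_bracket.1 hn
    rw [phase_ty] at hl ⊢
    exact .of_mem hl.2

theorem Derivable.phase_le {W : Word α β} {C : LTy α β} (h : Derivable W C) :
    phase W ≤ C.phase := by
  induction h with
  | id p => rw [phase_ty]
  | left X Y step h ihstep ih =>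
    intro w hw
    have hproper := (Derivable.left X Y step h).isProper.of_mem_phase hw
    obtain ⟨v, hv, y, hy, rfl⟩ := mem_phase_append.1 hw
    obtain ⟨x, hx, n, hn, rfl⟩ := mem_phase_append.1 hv
    refine LTy.mem_phase_of_covered hproper
      ((ihstep.mono fun _ _ h => h.2).covered_phase hn) fun m hm => ih ?_
    exact mem_phase_append.2 ⟨_, mem_phase_append.2 ⟨x, hx, m, hm, rfl⟩, y, hy, rfl⟩
  | ldivR ne h ih =>
    exact fun w hw => ⟨(Derivable.ldivR ne h).isProper.of_mem_phase hw,
      fun u hu => ih (Language.append_mem_mul hu hw)⟩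
  | rdivR ne h ih =>
    exact fun w hw => ⟨(Derivable.rdivR ne h).isProper.of_mem_phase hw,
      fun u hu => ih (mem_phase_append.2 ⟨w, hw, u, by rwa [phase_ty], rfl⟩)⟩
  | mulR hG hD ihG ihD =>
    refine fun w hw => ⟨(Derivable.mulR hG hD).isProper.of_mem_phase hw, .of_mem ?_⟩
    obtain ⟨u, hu, v, hv, rfl⟩ := mem_phase_append.1 hw
    exact Language.append_mem_mul (ihG hu) (ihD hv)
  | diaR i h ih =>
    refine fun w hw => ⟨(Derivable.diaR i h).isProper.of_mem_phase hw, .of_mem ?_⟩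
    obtain ⟨u, hu, rfl⟩ := mem_phase_bracket.1 hw
    exact ⟨u, ih hu, rfl⟩
  | boxR ne hG h ih =>
    exact fun w hw => ⟨(Derivable.boxR ne hG h).isProper.of_mem_phase hw,
      ih (mem_phase_bracket.2 ⟨w, hw, rfl⟩)⟩

theorem Derivable.cut {G X Y : Word α β} {A C : LTy α β} (hG : Derivable G A)
    (h : Derivable (X ++ [ty A] ++ Y) C) : Derivable (X ++ G ++ Y) C := by
  refine C.ty_mem_phase_and_derivable.2 _ (h.phase_le ?_)
  have hGA : G ∈ phase [ty A] := by rw [phase_ty]; exact hG.phase_le (mem_phase_self G)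
  exact mem_phase_append.2 ⟨_, mem_phase_append.2 ⟨X, mem_phase_self X, G, hGA, rfl⟩, Y,
    mem_phase_self Y, rfl⟩

end CutAdmissibility

section Parsing

theorem exists_eq_append_cl {w : Word α β} (h : minHeight w < 0) :
    ∃ D v, w = D ++ cl :: v ∧ IsBalanced D := by
  induction hn : w.length using Nat.strong_induction_on generalizing w with
  | _ n ih =>
    subst hn
    match w with
    | ty A :: w =>
      obtain ⟨D, v, rfl, hD⟩ := ih _ (by simp) (w := w) (by simp_all [minHeight]) rfl
      exact ⟨ty A :: D, v, rfl, .append (.ty A) hD⟩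
    | cl :: w => exact ⟨[], w, rfl, .nil⟩
    | op i :: w =>
      obtain ⟨D, v, rfl, hD⟩ := ih _ (by simp) (w := w) (by simp only [minHeight] at h; lia) rfl
      obtain ⟨D', v, rfl, hD'⟩ := ih _ (by simp; lia) (w := v) (by
        simp only [minHeight, minHeight_append, hD.1, hD.2] at h; lia) rfl
      exact ⟨bracket i D ++ D', v, by simp [bracket], (hD.bracket i).append hD'⟩

theorem IsBalanced.induction {motive : (w : Word α β) → IsBalanced w → Prop} (nil : motive [] .nil)
    (ty : ∀ A w (hw : IsBalanced w), motive w hw → motive (Token.ty A :: w) (.append (.ty A) hw))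
    (bracket : ∀ i D w (hD : IsBalanced D) (hw : IsBalanced w), motive D hD → motive w hw →
      motive (LDiamond.bracket i D ++ w) ((hD.bracket i).append hw))
    {w : Word α β} (hw : IsBalanced w) : motive w hw := by
  induction hn : w.length using Nat.strong_induction_on generalizing w with
  | _ n ih =>
    subst hn
    match w with
    | [] => exact nil
    | .ty A :: w =>
      have hw' := IsBalanced.of_append_left (u := [_]) hw (.ty A)
      exact ty A w hw' (ih _ (by simp) hw' rfl)
    | cl :: w =>
      have := minHeight_nonpos w
      simp only [IsBalanced, height, minHeight] at hw
      lia
    | op i :: w =>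
      obtain ⟨D, v, rfl, hD⟩ := exists_eq_append_cl (w := w) (by
        have := minHeight_le_height w
        simp only [IsBalanced, height] at hw
        lia)
      have hw' : op i :: (D ++ cl :: v) = LDiamond.bracket i D ++ v := by simp [LDiamond.bracket]
      simp only [hw'] at hw ⊢
      have hv := hw.of_append_left (hD.bracket i)
      exact bracket i D v hD hv (ih _ (by simp) hD rfl) (ih _ (by simp; lia) hv rfl)

theorem IsBalanced.append_cl_inj {u u' v v' : Word α β} (hu : IsBalanced u) (hu' : IsBalanced u')
    (h : u ++ cl :: v = u' ++ cl :: v') : u = u' ∧ v = v' := by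
  have no_cl {D : Word α β} : ¬ IsBalanced (cl :: D) := by
    have := minHeight_nonpos D
    simp only [IsBalanced, height, minHeight]
    lia
  rcases append_eq_append_iff.1 h with ⟨_ | ⟨_, a⟩, rfl, ha⟩ | ⟨_ | ⟨_, a⟩, rfl, ha⟩ <;>
    simp only [nil_append, append_nil, cons_append, cons.injEq, true_and] at ha ⊢
  · exact ha
  · exact (no_cl (ha.1 ▸ hu'.of_append_left hu)).elim
  · exact ha.symm
  · exact (no_cl (ha.1 ▸ hu.of_append_left hu')).elim

theorem IsBalanced.eq_map_ty_or_exists_bracket {w : Word α β} (hw : IsBalanced w) :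
    (∃ l : List (LTy α β), w = l.map Token.ty) ∨
      ∃ X i D Y, w = X ++ LDiamond.bracket i D ++ Y ∧ IsBalanced D := by
  induction hw using IsBalanced.induction with
  | nil => exact .inl ⟨[], rfl⟩
  | ty A w hw ih =>
    rcases ih with ⟨l, rfl⟩ | ⟨X, i, D, Y, rfl, hD⟩
    · exact .inl ⟨A :: l, rfl⟩
    · exact .inr ⟨Token.ty A :: X, i, D, Y, rfl, hD⟩
  | bracket i D w hD => exact .inr ⟨[], i, D, w, rfl, hD⟩

end Parsing

section Hedges

/-- A type of `L◇` as a labelled type with a single modality label. -/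
@[simp] def embed : PTy → LTy ℕ Unit
  | .prim p => prim p
  | .ldiv A B => ldiv (embed A) (embed B)
  | .rdiv B A => rdiv (embed B) (embed A)
  | .mul A B => mul (embed A) (embed B)
  | .dia A => dia () (embed A)
  | .box A => box () (embed A)

theorem embed_bijective : Function.Bijective embed := by
  constructor
  · intro A B h
    induction A generalizing B <;> cases B <;> simp_all [embed] <;> grind
  · intro A
    induction A with
    | prim p => exact ⟨.prim p, rfl⟩
    | ldiv A B ihA ihB => obtain ⟨A, rfl⟩ := ihA; obtain ⟨B, rfl⟩ := ihB; exact ⟨.ldiv A B, rfl⟩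
    | rdiv B A ihB ihA => obtain ⟨A, rfl⟩ := ihA; obtain ⟨B, rfl⟩ := ihB; exact ⟨.rdiv B A, rfl⟩
    | mul A B ihA ihB => obtain ⟨A, rfl⟩ := ihA; obtain ⟨B, rfl⟩ := ihB; exact ⟨.mul A B, rfl⟩
    | dia i A ih => obtain ⟨A, rfl⟩ := ih; exact ⟨.dia A, rfl⟩
    | box i A ih => obtain ⟨A, rfl⟩ := ih; exact ⟨.box A, rfl⟩

/-- The linearization of a hedge. -/
@[simp] def linearize : PHedge → Word ℕ Unit
  | [] => []
  | .leaf A :: G => ty (embed A) :: linearize G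
  | .node D :: G => bracket () (linearize D) ++ linearize G

@[simp] theorem linearize_append (G H : PHedge) :
    linearize (G ++ H) = linearize G ++ linearize H := by
  induction G using linearize.induct <;> simp_all

theorem isBalanced_linearize (G : PHedge) : IsBalanced (linearize G) := by
  induction G using linearize.induct with
  | case1 => simp
  | case2 A G ih => rw [linearize]; exact .append (.ty _) ih
  | case3 D G ihD ihG => rw [linearize]; exact (ihD.bracket ()).append ihG

theorem types_linearize (G : PHedge) :
    types (linearize G) = (yieldHedge G).map embed := by
  induction G using linearize.induct <;> simp_all [yieldHedge, yieldTree]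

theorem linearize_eq_nil_iff {G : PHedge} : linearize G = [] ↔ G = [] := by
  rcases G with _ | ⟨_ | _, _⟩ <;> simp [bracket]

theorem linearize_injective : Function.Injective linearize := by
  intro G H h
  induction G using linearize.induct generalizing H with
  | case1 => rcases H with _ | ⟨_ | _, _⟩ <;> simp_all [bracket]
  | case2 A G ih =>
    rcases H with _ | ⟨B | _, H⟩
    case cons.leaf =>
      simp only [linearize, cons.injEq, ty.injEq] at h
      rw [embed_bijective.injective h.1, ih h.2]
    all_goals simp [bracket] at h
  | case3 D G ihD ihG =>
    rcases H with _ | ⟨_ | D', H⟩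
    case cons.node =>
      simp only [linearize, bracket, cons_append, append_assoc, cons.injEq, true_and] at h
      obtain ⟨hD, hG⟩ := (isBalanced_linearize D).append_cl_inj (isBalanced_linearize D') h
      rw [ihD hD, ihG hG]
    all_goals simp [bracket] at h

theorem exists_linearize_eq {W : Word ℕ Unit} (hW : IsBalanced W) : ∃ G, linearize G = W := by
  induction hW using IsBalanced.induction with
  | nil => exact ⟨[], by simp⟩
  | ty A w _ ih =>
    obtain ⟨G, rfl⟩ := ih
    obtain ⟨A', rfl⟩ := embed_bijective.surjective A
    exact ⟨.leaf A' :: G, by simp⟩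
  | bracket i D w _ _ ihD ih =>
    obtain ⟨G, rfl⟩ := ih
    obtain ⟨H, rfl⟩ := ihD
    exact ⟨.node H :: G, by simp⟩

theorem exists_linearize_plug_eq (c : PCtx) :
    ∃ X Y, ∀ H, linearize (c.plug H) = X ++ linearize H ++ Y := by
  induction c with
  | hole G K => exact ⟨linearize G, linearize K, by simp [PCtx.plug]⟩
  | brk c G K ih =>
    obtain ⟨X, Y, h⟩ := ih
    exact ⟨linearize G ++ op () :: X, Y ++ cl :: linearize K,
      by simp [PCtx.plug, h, bracket]⟩

theorem exists_plug_eq_append (K : PHedge) (c : PCtx) :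
    ∃ c' : PCtx, ∀ H, c'.plug H = K ++ c.plug H := by
  cases c with
  | hole G G' => exact ⟨.hole (K ++ G) G', by simp [PCtx.plug]⟩
  | brk c G G' => exact ⟨.brk c (K ++ G) G', by simp [PCtx.plug]⟩

theorem exists_ctx_linearize {X Y : Word ℕ Unit} (h : IsBalanced (X ++ Y)) :
    ∃ c : PCtx, ∀ H, linearize (c.plug H) = X ++ linearize H ++ Y := by
  generalize hW : X ++ Y = W at h
  induction h using IsBalanced.induction generalizing X Y with
  | nil => exact ⟨.hole [] [], by simp_all [PCtx.plug]⟩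
  | ty A W hW' ih =>
    obtain ⟨K, hK⟩ := exists_linearize_eq (.append (.ty A) hW')
    rcases X with _ | ⟨_, X⟩
    · exact ⟨.hole [] K, by simp_all [PCtx.plug]⟩
    · simp only [cons_append, cons.injEq] at hW
      obtain ⟨rfl, rfl⟩ := hW
      obtain ⟨c, hc⟩ := ih rfl
      obtain ⟨A', rfl⟩ := embed_bijective.surjective A
      obtain ⟨c', hc'⟩ := exists_plug_eq_append [.leaf A'] c
      exact ⟨c', by simp [hc', hc]⟩
  | bracket i D W hD hW' ihD ih =>
    obtain ⟨G, rfl⟩ := exists_linearize_eq hD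
    obtain ⟨K, rfl⟩ := exists_linearize_eq hW'
    rcases append_eq_append_iff.1 hW with ⟨Z, hZ, rfl⟩ | ⟨X', rfl, hX'⟩
    · by_cases hX : X = []
      · exact ⟨.hole [] (.node G :: K), by simp_all [PCtx.plug]⟩
      by_cases hZ' : Z = []
      · exact ⟨.hole [.node G] K, by simp_all [PCtx.plug]⟩
      obtain ⟨a, b, rfl, rfl, hab⟩ := bracket_eq_append (N := []) (by simpa using hZ) hX hZ'
      obtain ⟨c, hc⟩ := ihD (X := a) (Y := b) (by simpa using hab.symm)
      exact ⟨.brk c [] K, by simp [PCtx.plug, hc, bracket]⟩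
    · obtain ⟨c, hc⟩ := ih hX'.symm
      obtain ⟨c', hc'⟩ := exists_plug_eq_append [.node G] c
      exact ⟨c', by simp [hc', hc]⟩

theorem derivable_of_pprov {G : PHedge} {A : PTy} (h : PProv G A) :
    Derivable (linearize G) (embed A) := by
  induction h with
  | id p => simpa using Derivable.id p
  | ldivL G c A B C _ _ ihG ih =>
    obtain ⟨X, Y, hc⟩ := exists_linearize_plug_eq c
    simpa [hc] using Derivable.left X Y (.ldiv _ ihG) (by simpa [hc] using ih)
  | rdivL G c A B C _ _ ihG ih =>
    obtain ⟨X, Y, hc⟩ := exists_linearize_plug_eq c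
    simpa [hc] using Derivable.left X Y (.rdiv _ ihG) (by simpa [hc] using ih)
  | mulL c A B C _ ih =>
    obtain ⟨X, Y, hc⟩ := exists_linearize_plug_eq c
    simpa [hc] using Derivable.left X Y (.mul _ _) (by simpa [hc] using ih)
  | diaL c A B _ ih =>
    obtain ⟨X, Y, hc⟩ := exists_linearize_plug_eq c
    simpa [hc] using Derivable.left X Y (.dia _ _) (by simpa [hc] using ih)
  | boxL c A B _ ih =>
    obtain ⟨X, Y, hc⟩ := exists_linearize_plug_eq c
    simpa [hc] using Derivable.left X Y (.box _ _) (by simpa [hc] using ih)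
  | ldivR G A B ne _ ih =>
    exact .ldivR (by simpa [linearize_eq_nil_iff] using ne) (by simpa using ih)
  | rdivR G A B ne _ ih =>
    exact .rdivR (by simpa [linearize_eq_nil_iff] using ne) (by simpa using ih)
  | mulR G D A B _ _ ihG ihD => simpa using ihG.mulR ihD
  | diaR G A _ ih => simpa using ih.diaR ()
  | boxR G A _ ih =>
    have ih : Derivable (bracket () (linearize G)) (embed A) := by simpa using ih
    refine .boxR (fun hG => ?_) (isBalanced_linearize G) ih
    exact not_derivable_bracket_nil _ _ (hG ▸ ih)
  | cut G c A B _ _ ihG ih =>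
    obtain ⟨X, Y, hc⟩ := exists_linearize_plug_eq c
    simpa [hc] using ihG.cut (by simpa [hc] using ih)

/-- The sequent `W ⇒ C` represents a sequent provable in `L◇`. -/
def RepresentsProvable (W : Word ℕ Unit) (C : LTy ℕ Unit) : Prop :=
  ∃ G A, PProv G A ∧ linearize G = W ∧ embed A = C

theorem representsProvable_iff {G : PHedge} {A : PTy} :
    RepresentsProvable (linearize G) (embed A) ↔ PProv G A := by
  constructor
  · rintro ⟨H, B, h, hG, hA⟩
    rwa [linearize_injective hG, embed_bijective.injective hA] at h
  · exact fun h => ⟨G, A, h, rfl, rfl⟩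

theorem RepresentsProvable.left {X N M Y : Word ℕ Unit} {C : LTy ℕ Unit}
    (step : LeftStep RepresentsProvable N M) (h : RepresentsProvable (X ++ M ++ Y) C) :
    RepresentsProvable (X ++ N ++ Y) C := by
  have hM := (step.mono (R := fun W _ => IsBalanced W) fun _ _ ⟨G, _, _, hG, _⟩ =>
    hG ▸ isBalanced_linearize G).isBalanced.2
  obtain ⟨G, C, h, hG, rfl⟩ := h
  obtain ⟨c, hc⟩ := exists_ctx_linearize (X := X) (Y := Y) (by
    have := (hG ▸ isBalanced_linearize G).swap hM .nil
    rwa [append_nil] at this)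
  have plug_eq {H : PHedge} (hH : linearize H = M) : G = c.plug H :=
    linearize_injective (by rw [hG, hc, hH])
  cases step with
  | ldiv B hA =>
    obtain ⟨H, A, hA, rfl, rfl⟩ := hA
    obtain ⟨B, rfl⟩ := embed_bijective.surjective B
    obtain rfl := plug_eq (H := [.leaf B]) (by simp)
    exact ⟨_, _, .ldivL H c A B C hA h, by simp [hc], rfl⟩
  | rdiv B hA =>
    obtain ⟨H, A, hA, rfl, rfl⟩ := hA
    obtain ⟨B, rfl⟩ := embed_bijective.surjective B
    obtain rfl := plug_eq (H := [.leaf B]) (by simp)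
    exact ⟨_, _, .rdivL H c A B C hA h, by simp [hc], rfl⟩
  | mul A B =>
    obtain ⟨A, rfl⟩ := embed_bijective.surjective A
    obtain ⟨B, rfl⟩ := embed_bijective.surjective B
    obtain rfl := plug_eq (H := [.leaf A, .leaf B]) (by simp)
    exact ⟨_, _, .mulL c A B C h, by simp [hc], rfl⟩
  | dia i A =>
    obtain ⟨A, rfl⟩ := embed_bijective.surjective A
    obtain rfl := plug_eq (H := [.node [.leaf A]]) (by simp)
    exact ⟨_, _, .diaL c A C h, by simp [hc], rfl⟩
  | box i A =>
    obtain ⟨A, rfl⟩ := embed_bijective.surjective A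
    obtain rfl := plug_eq (H := [.leaf A]) (by simp)
    exact ⟨_, _, .boxL c A C h, by simp [hc], rfl⟩

theorem Derivable.representsProvable {W : Word ℕ Unit} {C : LTy ℕ Unit} (h : Derivable W C) :
    RepresentsProvable W C := by
  induction h with
  | id p => exact ⟨_, _, .id p, by simp, rfl⟩
  | left X Y _ _ step ih => exact ih.left (step.mono fun _ _ h => h.2)
  | @ldivR G A B ne h ih =>
    obtain ⟨G, rfl⟩ := exists_linearize_eq (Derivable.ldivR ne h).isBalanced
    obtain ⟨A, rfl⟩ := embed_bijective.surjective A
    obtain ⟨B, rfl⟩ := embed_bijective.surjective B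
    have h : PProv (.leaf A :: G) B := representsProvable_iff.1 (by simpa using ih)
    exact ⟨G, _, .ldivR G A B (by simpa [linearize_eq_nil_iff] using ne) h, rfl, rfl⟩
  | @rdivR G A B ne h ih =>
    obtain ⟨G, rfl⟩ := exists_linearize_eq (Derivable.rdivR ne h).isBalanced
    obtain ⟨A, rfl⟩ := embed_bijective.surjective A
    obtain ⟨B, rfl⟩ := embed_bijective.surjective B
    have h : PProv (G ++ [.leaf A]) B := representsProvable_iff.1 (by simpa using ih)
    exact ⟨G, _, .rdivR G A B (by simpa [linearize_eq_nil_iff] using ne) h, rfl, rfl⟩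
  | mulR _ _ ihG ihD =>
    obtain ⟨G, A, hA, rfl, rfl⟩ := ihG
    obtain ⟨D, B, hB, rfl, rfl⟩ := ihD
    exact ⟨G ++ D, _, .mulR G D A B hA hB, by simp, rfl⟩
  | diaR i _ ih =>
    obtain ⟨G, A, hA, rfl, rfl⟩ := ih
    exact ⟨[.node G], _, .diaR G A hA, by simp, rfl⟩
  | @boxR i G A ne hG h ih =>
    obtain ⟨G, rfl⟩ := exists_linearize_eq hG
    obtain ⟨A, rfl⟩ := embed_bijective.surjective A
    have h : PProv [.node G] A := representsProvable_iff.1 (by simpa using ih)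
    exact ⟨G, _, .boxR G A h, rfl, rfl⟩

theorem derivable_linearize_iff {G : PHedge} {A : PTy} :
    Derivable (linearize G) (embed A) ↔ PProv G A :=
  ⟨fun h => representsProvable_iff.1 h.representsProvable, derivable_of_pprov⟩

end Hedges

section Grammar

variable {α β : Type} {T : Type*}

/-- Rules simulating derivable sequents with antecedents of length at most two and all types
in `S`. -/
def reductionRules (T : Type*) (S : Set (LTy α β)) : Set (ContextFreeRule T (LTy α β)) :=
  {r | ∃ W C, r = ⟨C, (types W).map .nonterminal⟩ ∧ Derivable W C ∧ C ∈ S ∧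
    (∀ A ∈ types W, A ∈ S) ∧ (types W).length ≤ 2}

/-- Rules rewriting a type to a terminal symbol to which the lexicon `I` assigns it. -/
def lexicalRules (I : Set (T × LTy α β)) : Set (ContextFreeRule T (LTy α β)) :=
  (fun x => ⟨x.2, [.terminal x.1]⟩) '' I

theorem finite_reductionRules (T : Type*) {S : Set (LTy α β)} (hS : S.Finite) :
    (reductionRules T S).Finite := by
  have := hS.to_subtype
  have hl : {l : List (LTy α β) | (∀ A ∈ l, A ∈ S) ∧ l.length ≤ 2}.Finite := by
    refine ((List.finite_length_le S 2).image (List.map Subtype.val)).subset fun l ⟨hlS, hl⟩ => ?_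
    lift l to List S using hlS
    exact ⟨l, by simpa using hl, rfl⟩
  refine (hS.image2 (fun C l => (⟨C, l.map .nonterminal⟩ : ContextFreeRule T _)) hl).subset ?_
  rintro _ ⟨W, C, rfl, -, hC, hWS, hW⟩
  exact ⟨C, hC, types W, ⟨hWS, hW⟩, rfl⟩

theorem finite_lexicalRules {I : Set (T × LTy α β)} (hI : I.Finite) : (lexicalRules I).Finite :=
  hI.image _

/-- The context-free grammar with the reduction rules of `S`, the lexical rules of `I` and initial
symbol `D`. -/
noncomputable abbrev reductionGrammar {I : Set (T × LTy α β)} {S : Set (LTy α β)} (hI : I.Finite)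
    (hS : S.Finite) (D : LTy α β) : ContextFreeGrammar T where
  NT := LTy α β
  initial := D
  rules := ((finite_reductionRules T hS).union (finite_lexicalRules hI)).toFinset

/-- A symbol of a sentential form matches the types that it can stand for. -/
def Matches (I : Set (T × LTy α β)) : Symbol T (LTy α β) → LTy α β → Prop
  | .terminal a, A => (a, A) ∈ I
  | .nonterminal B, A => B = A

/-- The words generated by the lexicon `I` and the distinguished type `D`. -/
def derivableLang (I : Set (T × LTy α β)) (D : LTy α β) : Language T :=
  {w | ∃ W, Derivable W D ∧ Forall₂ (fun a A => (a, A) ∈ I) w (types W)}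

variable {I : Set (T × LTy α β)} {S : Set (LTy α β)} {D : LTy α β}

theorem forall₂_matches_nonterminal (l : List (LTy α β)) :
    Forall₂ (Matches I) (l.map .nonterminal) l := by
  simp [Matches, forall₂_same]

@[simp] theorem types_map_ty (l : List (LTy α β)) : types (l.map ty) = l := by
  induction l <;> simp_all

theorem exists_eq_append_of_forall₂_append {γ δ : Type*} {R : γ → δ → Prop} {u v : List γ}
    {l : List δ} (h : Forall₂ R (u ++ v) l) :
    ∃ l₁ l₂, l = l₁ ++ l₂ ∧ Forall₂ R u l₁ ∧ Forall₂ R v l₂ :=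
  ⟨l.take u.length, l.drop u.length, (take_append_drop _ _).symm,
    by simpa using forall₂_take u.length h, by simpa using forall₂_drop u.length h⟩

theorem exists_eq_append_of_types_eq {W : Word α β} {P Q : List (LTy α β)} {A : LTy α β}
    (h : types W = P ++ A :: Q) :
    ∃ X Y, W = X ++ [ty A] ++ Y ∧ types X = P ∧ types Y = Q := by
  induction W generalizing P with
  | nil => simp at h
  | cons t W ih =>
    rcases t with B | i | _
    · rcases P with _ | ⟨B', P⟩ <;> simp only [types, nil_append, cons_append, cons.injEq] at h
      · exact ⟨[], W, by simp [h.1], rfl, h.2⟩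
      · obtain ⟨X, Y, rfl, rfl, rfl⟩ := ih h.2
        exact ⟨ty B :: X, Y, by simp, by simp [h.1], rfl⟩
    · obtain ⟨X, Y, rfl, rfl, rfl⟩ := ih h
      exact ⟨op i :: X, Y, by simp, rfl, rfl⟩
    · obtain ⟨X, Y, rfl, rfl, rfl⟩ := ih h
      exact ⟨cl :: X, Y, by simp, rfl, rfl⟩

theorem exists_derivable_of_derives (hI : I.Finite) (hS : S.Finite) {s : List (Symbol T (LTy α β))}
    (h : (reductionGrammar hI hS D).Derives [.nonterminal D] s) :
    ∃ W, Derivable W D ∧ Forall₂ (Matches I) s (types W) := by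
  induction h with
  | refl => exact ⟨[ty D], .refl D, forall₂_matches_nonterminal [D]⟩
  | tail _ hprod ih =>
    obtain ⟨W, hW, hs⟩ := ih
    obtain ⟨r, hr, hrew⟩ := hprod
    obtain ⟨p, q, rfl, rfl⟩ := hrew.exists_parts
    rw [append_assoc] at hs
    obtain ⟨P, _, hWP, hp, hrq⟩ := exists_eq_append_of_forall₂_append hs
    obtain ⟨A, Q, hA, hq, rfl⟩ := forall₂_cons_left_iff.1 hrq
    obtain rfl : r.input = A := hA
    rcases (Set.Finite.mem_toFinset _).1 hr with ⟨V, C, rfl, hV, -⟩ | ⟨⟨a, A⟩, ha, rfl⟩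
    · obtain ⟨X, Y, rfl, rfl, rfl⟩ := exists_eq_append_of_types_eq hWP
      refine ⟨X ++ V ++ Y, hV.cut hW, ?_⟩
      simp only [types_append]
      exact rel_append (rel_append hp (forall₂_matches_nonterminal _)) hq
    · refine ⟨W, hW, ?_⟩
      rw [hWP, append_assoc]
      exact rel_append hp (.cons ha hq)

theorem derives_lexical (hI : I.Finite) (hS : S.Finite) {w : List T} {l : List (LTy α β)}
    (h : Forall₂ (fun a A => (a, A) ∈ I) w l) :
    (reductionGrammar hI hS D).Derives (l.map .nonterminal) (w.map .terminal) := by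
  induction h with
  | nil => exact .refl _
  | @cons a A w l ha _ ih =>
    have hstep : (reductionGrammar hI hS D).Produces [.nonterminal A] [.terminal a] :=
      ⟨⟨A, [.terminal a]⟩, (Set.Finite.mem_toFinset _).2 (.inr ⟨(a, A), ha, rfl⟩),
        ContextFreeRule.Rewrites.input_output⟩
    exact (hstep.single.append_right _).trans (ih.append_left [.terminal a])

theorem derives_replace {g : ContextFreeGrammar T} {C E : g.NT} {p d q : List g.NT}
    (hC : g.Derives [.nonterminal C] ((p ++ [E] ++ q).map .nonterminal))
    (hE : g.Derives [.nonterminal E] (d.map .nonterminal)) :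
    g.Derives [.nonterminal C] ((p ++ d ++ q).map .nonterminal) := by
  simp only [map_append] at hC ⊢
  exact hC.trans ((hE.append_left _).append_right _)

theorem derives_of_length_le_two (hI : I.Finite) (hS : S.Finite) {W : Word α β} {C : LTy α β}
    (h : Derivable W C) (hW : ∀ A ∈ types W, A ∈ S) (hC : C ∈ S) (hlen : (types W).length ≤ 2) :
    (reductionGrammar hI hS D).Derives [.nonterminal C] ((types W).map .nonterminal) :=
  ContextFreeGrammar.Produces.single ⟨⟨C, (types W).map .nonterminal⟩,
    (Set.Finite.mem_toFinset _).2 (.inl ⟨W, C, rfl, h, hC, hW, hlen⟩),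
    ContextFreeRule.Rewrites.input_output⟩

theorem Derivable.derives {m : ℕ} {B : Set (α ⊕ β)} (hI : I.Finite)
    (hS : (smallTypes m B).Finite) {W : Word α β} {C : LTy α β} (h : Derivable W C)
    (hW : ∀ A ∈ types W, A ∈ smallTypes m B) (hC : C ∈ smallTypes m B) :
    (reductionGrammar hI hS D).Derives [.nonterminal C] ((types W).map .nonterminal) := by
  induction hn : W.length using Nat.strong_induction_on generalizing W C with
  | _ n ih =>
    subst hn
    rcases h.isBalanced.eq_map_ty_or_exists_bracket with ⟨l, rfl⟩ | ⟨X, i, V, Y, rfl, hV⟩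
    · rw [types_map_ty] at hW ⊢
      rcases le_or_gt l.length 2 with hlen | hlen
      · simpa using derives_of_length_le_two hI hS h (by simpa using hW) hC (by simpa using hlen)
      obtain ⟨p, d, q, E, hE, rfl, hd, hdl, hdE, hEC⟩ := h.reducible hlen hW hC
      simp only [mem_append, or_imp, forall_and] at hW
      refine derives_replace (E := E) ?_ ?_
      · simpa using ih _ (by simp; lia) hEC
          (by simpa [or_imp, forall_and] using ⟨hW.1.1, hE, hW.2⟩) hC rfl
      · simpa using ih _ (by simpa using hdl) hdE (by simpa using hW.1.2) hE rfl
    · obtain ⟨E, hE, F, hF, hVE, hEF, hFC⟩ :=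
        h.hasBracketSplits (subtypeClosed_smallTypes m B) X i V Y rfl hV hW hC
      simp only [types_append, types_bracket, mem_append, or_imp, forall_and] at hW ⊢
      have hder := derives_of_length_le_two (D := D) hI hS hEF (by simpa using hE) hF (by simp)
      refine derives_replace (E := F) ?_ (.trans (by simpa using hder) ?_)
      · simpa using ih _ (by simp [bracket]) hFC
          (by simpa [or_imp, forall_and] using ⟨hW.1.1, hF, hW.2⟩) hC rfl
      · exact ih _ (by simp [bracket]; lia) hVE hW.1.2 hE rfl

theorem exists_subset_smallTypes {R : Set (LTy α β)} (hR : R.Finite) :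
    ∃ m, ∃ B : Set (α ⊕ β), B.Finite ∧ R ⊆ smallTypes m B := by
  obtain ⟨m, hm⟩ := (hR.image fun A => A.labels.card).bddAbove
  refine ⟨m, ⋃ A ∈ R, {x | x ∈ A.labels}, hR.biUnion fun A _ => A.labels.finite_toSet,
    fun A hA => ⟨hm ⟨A, hA, rfl⟩, fun x hx => Set.mem_biUnion hA hx⟩⟩

theorem isContextFree_derivableLang (hI : I.Finite) (D : LTy α β) :
    (derivableLang I D).IsContextFree := by
  obtain ⟨m, B, hB, hsub⟩ := exists_subset_smallTypes ((hI.image Prod.snd).insert D)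
  have hS := finite_smallTypes m hB
  refine ⟨reductionGrammar hI hS D, Set.ext fun w => ⟨fun hw => ?_, ?_⟩⟩
  · obtain ⟨W, hW, hmatch⟩ := exists_derivable_of_derives hI hS hw
    exact ⟨W, hW, by simpa [Matches] using hmatch⟩
  · rintro ⟨W, hW, hlex⟩
    have hWS : ∀ A ∈ types W, A ∈ smallTypes m B := fun A hA => by
      obtain ⟨n, hn, rfl⟩ := mem_iff_getElem.1 hA
      exact hsub (.inr ⟨_, hlex.get (hlex.length_eq ▸ hn) hn, rfl⟩)
    exact (hW.derives hI hS hWS (hsub (.inl rfl))).trans (derives_lexical hI hS hlex)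

theorem grammarLang_eq_derivableLang {Sig : Type} (I : Finset (Sig × PTy)) (Dt : PTy) :
    grammarLang I Dt = derivableLang (Prod.map id embed '' I) (embed Dt) := by
  have hmem (a : Sig) (A : PTy) :
      (a, embed A) ∈ Prod.map id embed '' (I : Set (Sig × PTy)) ↔ (a, A) ∈ I := by
    simp [embed_bijective.injective.eq_iff]
  ext w
  constructor
  · rintro ⟨G, l, hG, hl, rfl, hyield⟩
    refine ⟨linearize G, derivable_linearize_iff.2 hG, ?_⟩
    simp only [types_linearize, hyield, forall₂_map_left_iff, forall₂_map_right_iff, hmem,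
      forall₂_same]
    exact hl
  · rintro ⟨W, hW, hlex⟩
    obtain ⟨G, rfl⟩ := exists_linearize_eq hW.isBalanced
    simp only [types_linearize, forall₂_map_right_iff, hmem] at hlex
    refine ⟨G, w.zip (yieldHedge G), derivable_linearize_iff.1 hW,
      fun _ hx => (forall₂_iff_zip.1 hlex).2 hx, ?_, ?_⟩
    · rw [map_fst_zip hlex.length_eq.le]
    · rw [map_snd_zip hlex.length_eq.ge]

end Grammar

end LDiamond

theorem LDiamond_recognizable_is_context_free_general {Sig : Type} (I : Finset (Sig × PTy))
    (Dt : PTy) : (grammarLang I Dt).IsContextFree := by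
  rw [LDiamond.grammarLang_eq_derivableLang]
  exact LDiamond.isContextFree_derivableLang (I.finite_toSet.image _) _

/-- Every language recognized by an L◇ grammar is context-free. -/
theorem LDiamond_recognizable_is_context_free
    {Sig : Type} [Fintype Sig] [DecidableEq Sig]
    (I : Finset (Sig × PTy)) (Dt : PTy) :
    (grammarLang I Dt).IsContextFree := by
  exact LDiamond_recognizable_is_context_free_general I Dt
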